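/- arXiv:2507.11009 — 10 statements merged into one kernel-verified Lean document; each statement's English description precedes it below -/
import Mathlib

section
/- Let u be a positive integer with u dividing q−1. Then the l elements 1, ζ^u, ζ^{2u}, ..., ζ^{(l−1)u} of F are linearly independent over B; equivalently, rank_B({ζ^{ju} : 0 ≤ j ≤ l−1}) = l. -/
/-- If `u ∣ q - 1` with `q ≥ 2`, `u > 0`, `m > 0`, and `q ^ l - 1 ∣ u * (q ^ m - 1)`,
then `l ≤ m`. -/
theorem le_of_pow_sub_one_dvd_mul {q l m u : ℕ} (hq : 2 ≤ q) (hm : 0 < m) (hu : 0 < u)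
    (hdvd : u ∣ q - 1) (h : q ^ l - 1 ∣ u * (q ^ m - 1)) : l ≤ m := by
  by_contra! hlt
  have hqm : 2 ≤ q ^ m := hq.trans (Nat.le_self_pow hm.ne' q)
  have hle : q ^ l - 1 ≤ u * (q ^ m - 1) :=
    Nat.le_of_dvd (Nat.mul_pos hu (by omega)) h
  have huq : u ≤ q - 1 := Nat.le_of_dvd (by omega) hdvd
  have hpow : q ^ m * q ≤ q ^ l := by
    rw [← pow_succ]
    exact Nat.pow_le_pow_right (by omega) hlt
  have hmul : u * (q ^ m - 1) ≤ (q - 1) * (q ^ m - 1) := Nat.mul_le_mul_right _ huq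
  obtain ⟨a, rfl⟩ := Nat.exists_eq_add_of_le hq
  obtain ⟨b, hb⟩ := Nat.exists_eq_add_of_le hqm
  rw [hb] at hle hmul hpow
  rw [show 2 + a - 1 = a + 1 by omega, show 2 + b - 1 = b + 1 by omega] at hmul
  rw [show 2 + b - 1 = b + 1 by omega] at hle
  have : (2 + a) ^ l ≤ (a + 1) * (b + 1) + 1 := by omega
  nlinarith

open IntermediateField in
/-- An element `β` of a finite field whose minimal polynomial over a subfield with `q` elements
has degree `m` satisfies `β ^ (q ^ m - 1) = 1` unless it is zero. -/
theorem FiniteField.pow_card_pow_natDegree_minpoly_sub_one {B F : Type*} [Field B] [Field F]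
    [Fintype B] [Finite F] [Algebra B F] {β : F} (hβ : β ≠ 0) :
    β ^ (Fintype.card B ^ (minpoly B β).natDegree - 1) = 1 := by
  have : Fintype B⟮β⟯ := Fintype.ofFinite _
  have hcard : Fintype.card B⟮β⟯ = Fintype.card B ^ (minpoly B β).natDegree := by
    rw [Module.card_eq_pow_finrank (K := B),
      adjoin.finrank (Algebra.IsIntegral.isIntegral β)]
  have hgen : AdjoinSimple.gen B β ≠ 0 := fun h =>
    hβ (by simpa using congrArg (algebraMap B⟮β⟯ F) h)
  rw [← hcard]
  simpa using congrArg (algebraMap B⟮β⟯ F) (FiniteField.pow_card_sub_one_eq_one _ hgen)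

/-- Let `B = GF(q)`, `F = GF(q^l)` and `ζ` a primitive element of `F`
(i.e. of multiplicative order `q^l - 1`). If `u > 0` divides `q - 1`, then the `l`
elements `1, ζ^u, ζ^{2u}, …, ζ^{(l-1)u}` are linearly independent over `B`, i.e.
`rank_B({ζ^{ju} : 0 ≤ j ≤ l-1}) = l`. -/
theorem stmt_0 (q l : ℕ) (hl : 0 < l)
    (B F : Type*) [Field B] [Field F] [Fintype B] [Fintype F] [Algebra B F]
    (hq : Fintype.card B = q) (hrk : Module.finrank B F = l)
    (ζ : F) (hζ : orderOf ζ = q ^ l - 1)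
    (u : ℕ) (hu : 0 < u) (hdvd : u ∣ q - 1) :
    Module.finrank B ↥(Submodule.span B {x : F | ∃ j < l, x = ζ ^ (j * u)}) = l := by
  have hq2 : 2 ≤ q := hq ▸ Fintype.one_lt_card
  have hζ0 : ζ ≠ 0 := by
    rintro rfl
    have := Nat.le_self_pow hl.ne' q
    rw [orderOf_zero] at hζ
    omega
  have hint : IsIntegral B (ζ ^ u) := Algebra.IsIntegral.isIntegral _
  have hdeg : (minpoly B (ζ ^ u)).natDegree = l := by
    refine le_antisymm (hrk ▸ minpoly.natDegree_le _) ?_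
    refine le_of_pow_sub_one_dvd_mul hq2 (minpoly.natDegree_pos hint) hu hdvd ?_
    rw [← hζ, orderOf_dvd_iff_pow_eq_one, pow_mul, ← hq]
    exact FiniteField.pow_card_pow_natDegree_minpoly_sub_one (pow_ne_zero u hζ0)
  have hset : {x : F | ∃ j < l, x = ζ ^ (j * u)} =
      Set.range fun i : Fin (minpoly B (ζ ^ u)).natDegree => (ζ ^ u) ^ (i : ℕ) := by
    ext x
    simp only [Set.mem_ofPred_eq, Set.mem_range, Fin.exists_iff, hdeg, ← pow_mul, mul_comm u,
      exists_prop, eq_comm]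
  rw [hset, finrank_span_eq_card (linearIndependent_pow (ζ ^ u)), Fintype.card_fin, hdeg]
end

section
/- Let u be a positive divisor of q−1. For every i ∈ {1, ..., n̄}, rank_B({ζ^{u(t + s·r̄^{i−1})} : t ∈ T_i, s ∈ {0, ..., r̄−1}}) = l; i.e., these l field elements form a basis of F over B. (This is the repair condition for the failed rack i in Construction 1, where the repair polynomials are g_{t,s}(x) = ζ^{ut} x^{us}.) -/
open IntermediateField in
/-- In an extension `F` of `B = GF(q)`, if `ζ` is primitive and `0 < u ∣ q - 1`, then `ζ ^ u` has
full degree over `B`. -/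
theorem natDegree_minpoly_pow_of_orderOf_eq {B F : Type*} [Field B] [Field F] [Fintype B]
    [Fintype F] [Algebra B F] {ζ : F}
    (hζ : orderOf ζ = Fintype.card B ^ Module.finrank B F - 1)
    {u : ℕ} (hu : 0 < u) (hdvd : u ∣ Fintype.card B - 1) :
    (minpoly B (ζ ^ u)).natDegree = Module.finrank B F := by
  have hint : IsIntegral B (ζ ^ u) := Algebra.IsIntegral.isIntegral _
  have hcard : Nat.card B⟮ζ ^ u⟯ = Fintype.card B ^ (minpoly B (ζ ^ u)).natDegree := by
    rw [← adjoin.finrank hint, Module.natCard_eq_pow_finrank (K := B), Nat.card_eq_fintype_card]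
  have hd : 0 < (minpoly B (ζ ^ u)).natDegree := minpoly.natDegree_pos hint
  refine le_antisymm (minpoly.natDegree_le _) (Nat.le_of_not_lt fun hlt => ?_)
  have hq : 1 < Fintype.card B := Fintype.one_lt_card
  generalize (minpoly B (ζ ^ u)).natDegree = d at *
  generalize Fintype.card B = q at *
  generalize Module.finrank B F = l at *
  have hl : q ^ (d + 1) ≤ q ^ l := Nat.pow_le_pow_right hq.le hlt
  have hqd : q ≤ q ^ d := Nat.le_self_pow hd.ne' q
  have hζ0 : ζ ≠ 0 := by
    rintro rfl
    rw [orderOf_zero] at hζ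
    have := pow_succ q d
    nlinarith [Nat.sub_eq_zero_iff_le.mp hζ.symm]
  have hgen : AdjoinSimple.gen B (ζ ^ u) ≠ 0 := by
    intro h
    have := congrArg (algebraMap B⟮ζ ^ u⟯ F) h
    rw [AdjoinSimple.algebraMap_gen, map_zero] at this
    exact pow_ne_zero u hζ0 this
  have hpow : ζ ^ (u * (q ^ d - 1)) = 1 := by
    have := Fintype.ofFinite B⟮ζ ^ u⟯
    have h := FiniteField.pow_card_sub_one_eq_one _ hgen
    rw [← Nat.card_eq_fintype_card, hcard] at h
    have := congrArg (algebraMap B⟮ζ ^ u⟯ F) h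
    rwa [map_pow, AdjoinSimple.algebraMap_gen, map_one, ← pow_mul] at this
  have hle := Nat.le_of_dvd (Nat.mul_pos hu (by omega)) (orderOf_dvd_of_pow_eq_one hpow)
  have hle' := hle.trans (Nat.mul_le_mul_right _ (Nat.le_of_dvd (by omega) hdvd))
  rw [hζ] at hle'
  rw [pow_succ] at hl
  obtain ⟨a, rfl⟩ := Nat.exists_eq_add_of_lt hq
  obtain ⟨b, hb⟩ := Nat.exists_eq_add_of_lt (hq.trans_le hqd)
  rw [hb] at hl hle'
  have ha : 1 + a + 1 - 1 = a + 1 := by omega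
  have hb' : 1 + b + 1 - 1 = b + 1 := by omega
  rw [ha, hb', Nat.sub_le_iff_le_add] at hle'
  nlinarith

/-- **repair condition of Construction 1.** Let `B = GF(q)`,
`l = r^n` (`n, r ≥ 2`), `F = GF(q^l)`, `ζ` a primitive element of `F`, and let
`u > 0` divide `q - 1`.  For `i ∈ {1, …, n}` and
`T_i = {t < l : (t / r^(i-1)) % r = 0}`, the `l` elements
`ζ^{u(t + s·r^(i-1))}` with `t ∈ T_i`, `s ∈ {0, …, r-1}` form a basis of `F`
over `B`, i.e. their `B`-rank is `l`. -/
theorem stmt_3 (q n r l : ℕ) (hn : 2 ≤ n) (hr : 2 ≤ r) (hl : l = r ^ n)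
    (B F : Type*) [Field B] [Field F] [Fintype B] [Fintype F] [Algebra B F]
    (hq : Fintype.card B = q) (hrk : Module.finrank B F = l)
    (ζ : F) (hζ : orderOf ζ = q ^ l - 1)
    (u : ℕ) (hu : 0 < u) (hdvd : u ∣ q - 1)
    (i : ℕ) (hi : i ∈ Finset.Icc 1 n) :
    Module.finrank B ↥(Submodule.span B
      {x : F | ∃ t, (t < l ∧ t / r ^ (i - 1) % r = 0) ∧
        ∃ s < r, x = ζ ^ (u * (t + s * r ^ (i - 1)))}) = l := by
  subst hq hrk
  have hdeg := natDegree_minpoly_pow_of_orderOf_eq hζ hu hdvd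
  have hli := linearIndependent_pow (K := B) (ζ ^ u)
  refine le_antisymm (Submodule.finrank_le _) ?_
  calc Module.finrank B F = Module.finrank B ↥(Submodule.span B (Set.range
        fun j : Fin (minpoly B (ζ ^ u)).natDegree => (ζ ^ u) ^ (j : ℕ))) := by
        rw [finrank_span_eq_card hli, Fintype.card_fin, hdeg]
    _ ≤ _ := by
        refine Submodule.finrank_mono (Submodule.span_mono ?_)
        rintro _ ⟨⟨m, hm⟩, rfl⟩
        rw [hdeg] at hm
        have hP : 0 < r ^ (i - 1) := by positivity
        generalize r ^ (i - 1) = P at *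
        have hsm : m / P % r * P ≤ m :=
          (Nat.mul_le_mul_right _ (Nat.mod_le _ _)).trans (Nat.div_mul_le_self m P)
        refine ⟨m - m / P % r * P, ⟨(Nat.sub_le _ _).trans_lt hm, ?_⟩, m / P % r,
          Nat.mod_lt _ (by omega), ?_⟩
        · rw [mul_comm, Nat.sub_mul_div]
          exact Nat.sub_mod_eq_zero_of_mod_eq (Nat.mod_mod _ _).symm
        · rw [Nat.sub_add_cancel hsm, pow_mul]
end

section
/- Let u be a positive divisor of q−1 and fix i ∈ {1, ..., n̄}. For each e ∈ {1,...,n̄} \ {i}, let b_e = rank_B({ζ^{u(t + s·r̄^{e−1})} : t ∈ T_i, s ∈ {0, ..., r̄−1}}). Then the repair bandwidth b = Σ_{e ∈ {1,...,n̄}\{i}} b_e of the linear repair scheme of Construction 1 satisfies b < (n̄+1)·l/r̄. -/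
/-- The powers of `ζ` with exponents `u * (x * N + c)`, `x < X`, `c < C`, span a space of dimension
at most `X * C`. -/
lemma finrank_span_le_of_subset_grid {B F : Type*} [Field B] [Field F] [Algebra B F]
    (ζ : F) (u N X C : ℕ) [FiniteDimensional B F] (S : Set F)
    (hS : ∀ y ∈ S, ∃ x < X, ∃ c < C, y = ζ ^ (u * (x * N + c))) :
    Module.finrank B ↥(Submodule.span B S) ≤ X * C := by
  classical
  let T : Finset F := (Finset.range X ×ˢ Finset.range C).image
    fun p => ζ ^ (u * (p.1 * N + p.2))
  have hST : S ⊆ (T : Set F) := by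
    intro y hy
    obtain ⟨x, hx, c, hc, rfl⟩ := hS y hy
    simp only [T, Finset.coe_image, Set.mem_image, Finset.mem_coe, Finset.mem_product,
      Finset.mem_range]
    exact ⟨(x, c), ⟨hx, hc⟩, rfl⟩
  calc Module.finrank B ↥(Submodule.span B S)
      ≤ Module.finrank B ↥(Submodule.span B (T : Set F)) :=
        Submodule.finrank_mono (Submodule.span_mono hST)
    _ ≤ T.card := finrank_span_finset_le_card T
    _ ≤ X * C := Finset.card_image_le.trans (by simp)

/-- A number below `r ^ (j + 1 + p)` whose `j`-th base-`r` digit vanishes splits into its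
`p` higher digits and its `j` lower digits. -/
lemma exists_eq_add_of_digit_eq_zero {r j p t : ℕ} (hr : 0 < r) (ht : t < r ^ (j + 1 + p))
    (h0 : t / r ^ j % r = 0) :
    ∃ x < r ^ p, ∃ a < r ^ j, t = x * r ^ (j + 1) + a := by
  have hM : 0 < r ^ j := pow_pos hr j
  refine ⟨t / r ^ j / r, ?_, t % r ^ j, Nat.mod_lt _ hM, ?_⟩
  · rw [Nat.div_div_eq_div_mul, ← pow_succ]
    apply Nat.div_lt_of_lt_mul
    rwa [← pow_add]
  · have h1 := Nat.div_add_mod t (r ^ j)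
    have h2 := Nat.div_add_mod (t / r ^ j) r
    rw [h0, add_zero] at h2
    calc t = r ^ j * (r * (t / r ^ j / r)) + t % r ^ j := by rw [h2, h1]
      _ = _ := by ring

lemma sum_range_mul_succ_pow (k m : ℕ) :
    ∑ d ∈ Finset.range m, k * (k + 1) ^ d + 1 = (k + 1) ^ m := by
  induction m with
  | zero => simp
  | succ m ih => rw [Finset.sum_range_succ, pow_succ]; linear_combination ih


/-- **Theorem 8: repair bandwidth of Construction 1.** Let
`B = GF(q)`, `l = r^n` (`n, r ≥ 2`), `F = GF(q^l)`, `ζ` a primitive element of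
`F`, `u > 0` a divisor of `q - 1`, and fix a host rack `i ∈ {1, …, n}` with
`T_i = {t < l : (t / r^(i-1)) % r = 0}`.  For every helper rack `e ≠ i` let
`b_e = rank_B({ζ^{u(t + s·r^(e-1))} : t ∈ T_i, s ∈ {0, …, r-1}})`.  Then the
repair bandwidth `b = Σ_{e ≠ i} b_e` satisfies `b < (n+1)·l/r`. -/
theorem stmt_4 (q n r l : ℕ) (hn : 2 ≤ n) (hr : 2 ≤ r) (hl : l = r ^ n)
    (B F : Type*) [Field B] [Field F] [Fintype B] [Fintype F] [Algebra B F]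
    (hq : Fintype.card B = q) (hrk : Module.finrank B F = l)
    (ζ : F) (hζ : orderOf ζ = q ^ l - 1)
    (u : ℕ) (hu : 0 < u) (hdvd : u ∣ q - 1)
    (i : ℕ) (hi : i ∈ Finset.Icc 1 n) :
    ((∑ e ∈ (Finset.Icc 1 n).erase i,
        Module.finrank B ↥(Submodule.span B
          {x : F | ∃ t, (t < l ∧ t / r ^ (i - 1) % r = 0) ∧
            ∃ s < r, x = ζ ^ (u * (t + s * r ^ (e - 1)))}) : ℕ) : ℝ)
      < (n + 1) * l / r := by
  have : FiniteDimensional B F := Module.Finite.of_finite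
  obtain ⟨hi1, hin⟩ := Finset.mem_Icc.1 hi
  obtain ⟨j, rfl⟩ : ∃ j, i = j + 1 := ⟨i - 1, by omega⟩
  obtain ⟨p, rfl⟩ : ∃ p, n = j + 1 + p := ⟨n - (j + 1), by omega⟩
  obtain ⟨k, rfl⟩ : ∃ k, r = k + 1 := ⟨r - 1, by omega⟩
  have hk : 0 < k + 1 := by omega
  subst hl
  let b : ℕ → ℕ := fun e => Module.finrank B ↥(Submodule.span B
          {x : F | ∃ t, (t < (k + 1) ^ (j + 1 + p) ∧ t / (k + 1) ^ (j + 1 - 1) % (k + 1) = 0) ∧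
            ∃ s < k + 1, x = ζ ^ (u * (t + s * (k + 1) ^ (e - 1)))})
  have hlow : ∀ d, b (1 + d) ≤ (k + 1) ^ p * ((k + 1) ^ j + k * (k + 1) ^ d) := by
    intro d
    apply finrank_span_le_of_subset_grid ζ u ((k + 1) ^ (j + 1))
    rintro y ⟨t, ⟨ht, h0⟩, s, hs, rfl⟩
    obtain ⟨x, hx, a, ha, rfl⟩ := exists_eq_add_of_digit_eq_zero hk ht h0
    refine ⟨x, hx, a + s * (k + 1) ^ d, ?_, ?_⟩
    · exact add_lt_add_of_lt_of_le ha (Nat.mul_le_mul_right _ (Nat.le_of_lt_succ hs))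
    · rw [Nat.add_sub_cancel_left, add_assoc]
  have hhigh : ∀ d, b (j + 2 + d) ≤ ((k + 1) ^ p + k * (k + 1) ^ d) * (k + 1) ^ j := by
    intro d
    apply finrank_span_le_of_subset_grid ζ u ((k + 1) ^ (j + 1))
    rintro y ⟨t, ⟨ht, h0⟩, s, hs, rfl⟩
    obtain ⟨x, hx, a, ha, rfl⟩ := exists_eq_add_of_digit_eq_zero hk ht h0
    refine ⟨x + s * (k + 1) ^ d, ?_, a, ha, ?_⟩
    · exact add_lt_add_of_lt_of_le hx (Nat.mul_le_mul_right _ (Nat.le_of_lt_succ hs))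
    · rw [show j + 2 + d - 1 = j + 1 + d by omega]
      congr 2
      ring
  have hsplit : (Finset.Icc 1 (j + 1 + p)).erase (j + 1)
      = Finset.Ico 1 (j + 1) ∪ Finset.Ico (j + 2) (j + 2 + p) := by
    ext e
    simp only [Finset.mem_erase, Finset.mem_Icc, Finset.mem_union, Finset.mem_Ico]
    omega
  have hdisj : Disjoint (Finset.Ico 1 (j + 1)) (Finset.Ico (j + 2) (j + 2 + p)) := by
    rw [Finset.disjoint_left]
    intro e
    simp only [Finset.mem_Ico]
    omega
  have hsum_low : ∑ e ∈ Finset.Ico 1 (j + 1), b e + (k + 1) ^ p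
      ≤ (j + 1) * ((k + 1) ^ p * (k + 1) ^ j) := by
    rw [Finset.sum_Ico_eq_sum_range, Nat.add_sub_cancel]
    have h := Finset.sum_le_sum fun d (_ : d ∈ Finset.range j) => hlow d
    rw [← Finset.mul_sum, Finset.sum_add_distrib, Finset.sum_const, Finset.card_range,
      smul_eq_mul] at h
    have hg := sum_range_mul_succ_pow k j
    calc _ ≤ _ := Nat.add_le_add_right h _
      _ = _ := by linear_combination (k + 1) ^ p * hg
  have hsum_high : ∑ e ∈ Finset.Ico (j + 2) (j + 2 + p), b e + (k + 1) ^ j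
      ≤ (p + 1) * ((k + 1) ^ p * (k + 1) ^ j) := by
    rw [Finset.sum_Ico_eq_sum_range, Nat.add_sub_cancel_left]
    have h := Finset.sum_le_sum fun d (_ : d ∈ Finset.range p) => hhigh d
    rw [← Finset.sum_mul, Finset.sum_add_distrib, Finset.sum_const, Finset.card_range,
      smul_eq_mul] at h
    have hg := sum_range_mul_succ_pow k p
    calc _ ≤ _ := Nat.add_le_add_right h _
      _ = _ := by linear_combination (k + 1) ^ j * hg
  have hpos' : 0 < (k + 1) ^ j := pow_pos hk j
  have hpos : 0 < (k + 1) ^ p := pow_pos hk p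
  have hmain : (∑ e ∈ (Finset.Icc 1 (j + 1 + p)).erase (j + 1), b e) * (k + 1)
      < (j + 1 + p + 1) * (k + 1) ^ (j + 1 + p) := by
    rw [hsplit, Finset.sum_union hdisj]
    calc _ < (j + 1 + p + 1) * ((k + 1) ^ p * (k + 1) ^ j) * (k + 1) := by
          apply Nat.mul_lt_mul_of_pos_right _ hk
          linarith
      _ = _ := by ring
  rw [lt_div_iff₀ (by positivity)]
  exact_mod_cast hmain
end

section
/- Let u be a positive divisor of q−1, and let i, e ∈ {1, ..., n̄} with e < i. Then rank_B({ζ^{u(t + s·r̄^{e−1})} : t ∈ T_i, s ∈ {0, ..., r̄−1}}) ≤ l/r̄ + (r̄−1)·l/r̄^{i−e+1}. -/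
/-- If the digit of `t < r ^ (a + 1 + m)` at position `a` in base `r` is zero, then
`t + s * r ^ d` with `s < r` is `c + b * r ^ (a + 1)` for some `b < r ^ m` and some
`c < r ^ a + (r - 1) * r ^ d`. -/
theorem exists_eq_add_mul_pow_of_digit_eq_zero {r a m d t s : ℕ} (hr : 0 < r)
    (ht : t < r ^ (a + 1 + m)) (htd : t / r ^ a % r = 0) (hs : s < r) :
    ∃ b c, b < r ^ m ∧ c < r ^ a + (r - 1) * r ^ d ∧
      t + s * r ^ d = c + b * r ^ (a + 1) := by
  refine ⟨t / r ^ (a + 1), t % r ^ a + s * r ^ d, ?_, ?_, ?_⟩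
  · rw [Nat.div_lt_iff_lt_mul (by positivity), ← pow_add, add_comm m]
    exact ht
  · exact add_lt_add_of_lt_of_le (Nat.mod_lt _ (by positivity))
      (Nat.mul_le_mul_right _ (by omega))
  · have hdiv := Nat.mod_add_div t (r ^ a)
    have hdiv' := Nat.mod_add_div (t / r ^ a) r
    rw [htd, zero_add, Nat.div_div_eq_div_mul, ← pow_succ] at hdiv'
    rw [← hdiv'] at hdiv
    nth_rewrite 1 [← hdiv]
    ring

/-- In the setting of Construction 1 (`B = GF(q)`, `l = r^n`,
`F = GF(q^l)`, `ζ` primitive in `F`, `u > 0` a divisor of `q-1`,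
`T_i = {t < l : (t / r^(i-1)) % r = 0}`), if `e < i` (both in `{1, …, n}`) then
`rank_B({ζ^{u(t + s·r^(e-1))} : t ∈ T_i, s ∈ {0,…,r-1}}) ≤ l/r + (r-1)·l/r^(i-e+1)`. -/
theorem stmt_5 (q n r l : ℕ) (hn : 2 ≤ n) (hr : 2 ≤ r) (hl : l = r ^ n)
    (B F : Type*) [Field B] [Field F] [Fintype B] [Fintype F] [Algebra B F]
    (hq : Fintype.card B = q) (hrk : Module.finrank B F = l)
    (ζ : F) (hζ : orderOf ζ = q ^ l - 1)
    (u : ℕ) (hu : 0 < u) (hdvd : u ∣ q - 1)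
    (i e : ℕ) (hi : i ∈ Finset.Icc 1 n) (he : e ∈ Finset.Icc 1 n) (hei : e < i) :
    ((Module.finrank B ↥(Submodule.span B
        {x : F | ∃ t, (t < l ∧ t / r ^ (i - 1) % r = 0) ∧
          ∃ s < r, x = ζ ^ (u * (t + s * r ^ (e - 1)))}) : ℕ) : ℝ)
      ≤ (l : ℝ) / r + ((r : ℝ) - 1) * l / r ^ (i - e + 1) := by
  have : Module.Finite B F := Module.Finite.of_finite
  rw [Finset.mem_Icc] at hi he
  obtain ⟨d, rfl⟩ : ∃ d, e = d + 1 := ⟨e - 1, by omega⟩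
  obtain ⟨k, rfl⟩ : ∃ k, i = d + k + 1 + 1 := ⟨i - d - 2, by omega⟩
  obtain ⟨m, rfl⟩ : ∃ m, n = d + k + 1 + 1 + m := ⟨n - (d + k + 1 + 1), by omega⟩
  have hk : d + k + 1 + 1 - (d + 1) + 1 = k + 2 := by omega
  simp only [hk]
  have hcard : Module.finrank B ↥(Submodule.span B
      {x : F | ∃ t, (t < l ∧ t / r ^ (d + k + 1) % r = 0) ∧
        ∃ s < r, x = ζ ^ (u * (t + s * r ^ d))})
      ≤ r ^ m * (r ^ (d + k + 1) + (r - 1) * r ^ d) := by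
    classical
    let P := (Finset.range (r ^ m) ×ˢ Finset.range (r ^ (d + k + 1) + (r - 1) * r ^ d)).image
      fun p => ζ ^ (u * (p.2 + p.1 * r ^ (d + k + 1 + 1)))
    refine (Submodule.finrank_mono (Submodule.span_mono (t := (P : Set F)) ?_)).trans
      ((finrank_span_finset_le_card P).trans (Finset.card_image_le.trans (by simp)))
    rintro x ⟨t, ⟨ht, htd⟩, s, hs, rfl⟩
    obtain ⟨b, c, hb, hc, h⟩ :=
      exists_eq_add_mul_pow_of_digit_eq_zero (by omega) (hl ▸ ht) htd hs (d := d)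
    exact Finset.mem_coe.2 (Finset.mem_image.2
      ⟨(b, c), Finset.mem_product.2 ⟨Finset.mem_range.2 hb, Finset.mem_range.2 hc⟩, by rw [h]⟩)
  refine (Nat.cast_le.2 hcard).trans (le_of_eq ?_)
  have hr0 : (r : ℝ) ≠ 0 := by positivity
  subst hl
  push_cast [Nat.cast_sub (show 1 ≤ r by omega)]
  field_simp
  ring
end

section
/- Let u be a positive divisor of q−1, and let i, e ∈ {1, ..., n̄} with e > i. Then rank_B({ζ^{u(t + s·r̄^{e−1})} : t ∈ T_i, s ∈ {0, ..., r̄−1}}) ≤ l/r̄ + (r̄−1)·l/r̄^{n̄−e+2}. -/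
/-- A natural number below `p * r * K` whose digit at the place of weight `p` in base `r` vanishes
has the form `a * (p * r) + b` with `a < K` and `b < p`. -/
theorem Nat.exists_eq_mul_add_of_div_mod_eq_zero {p r K m : ℕ} (hp : 0 < p)
    (hm : m < p * r * K) (h : m / p % r = 0) :
    ∃ a < K, ∃ b < p, m = a * (p * r) + b := by
  refine ⟨m / p / r, ?_, m % p, Nat.mod_lt _ hp, ?_⟩
  · rw [Nat.div_div_eq_div_mul]
    exact Nat.div_lt_of_lt_mul hm
  · have h₁ := Nat.div_add_mod m p
    have h₂ := Nat.div_mul_cancel (Nat.dvd_of_mod_eq_zero h)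
    calc m = p * (m / p / r * r) + m % p := by rw [h₂, h₁]
      _ = _ := by ring

/-- The powers `x ^ f m`, for `m < p * r * K` with vanishing digit at the place of weight `p` in
base `r`, span a subspace of dimension at most `K * p`. -/
theorem finrank_span_pow_le_of_digit_eq_zero {B F : Type*} [Field B] [Field F] [Algebra B F]
    {p r K : ℕ} (hp : 0 < p) (x : F) (f : ℕ → ℕ) {S : Set F}
    (hS : ∀ y ∈ S, ∃ m < p * r * K, m / p % r = 0 ∧ y = x ^ f m) :
    Module.finrank B (Submodule.span B S) ≤ K * p := by
  classical
  let A : Finset F := (Finset.range K ×ˢ Finset.range p).image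
    fun z => x ^ f (z.1 * (p * r) + z.2)
  have hSA : S ⊆ A := by
    intro y hy
    obtain ⟨m, hm, hd, rfl⟩ := hS y hy
    obtain ⟨a, ha, b, hb, rfl⟩ := Nat.exists_eq_mul_add_of_div_mod_eq_zero hp hm hd
    exact Finset.mem_coe.2 (Finset.mem_image.2 ⟨(a, b), by simp [ha, hb], rfl⟩)
  calc Module.finrank B (Submodule.span B S)
      ≤ Module.finrank B (Submodule.span B (A : Set F)) :=
        Submodule.finrank_mono (Submodule.span_mono hSA)
    _ ≤ A.card := finrank_span_finset_le_card A
    _ ≤ K * p := by simpa using Finset.card_image_le (s := Finset.range K ×ˢ Finset.range p)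


/-- In the setting of Construction 1 (`B = GF(q)`, `l = r^n`,
`F = GF(q^l)`, `ζ` primitive in `F`, `u > 0` a divisor of `q-1`,
`T_i = {t < l : (t / r^(i-1)) % r = 0}`), if `e > i` (both in `{1, …, n}`) then
`rank_B({ζ^{u(t + s·r^(e-1))} : t ∈ T_i, s ∈ {0,…,r-1}}) ≤ l/r + (r-1)·l/r^(n-e+2)`. -/
theorem stmt_6 (q n r l : ℕ) (hn : 2 ≤ n) (hr : 2 ≤ r) (hl : l = r ^ n)
    (B F : Type*) [Field B] [Field F] [Fintype B] [Fintype F] [Algebra B F]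
    (hq : Fintype.card B = q) (hrk : Module.finrank B F = l)
    (ζ : F) (hζ : orderOf ζ = q ^ l - 1)
    (u : ℕ) (hu : 0 < u) (hdvd : u ∣ q - 1)
    (i e : ℕ) (hi : i ∈ Finset.Icc 1 n) (he : e ∈ Finset.Icc 1 n) (hei : e > i) :
    ((Module.finrank B ↥(Submodule.span B
        {x : F | ∃ t, (t < l ∧ t / r ^ (i - 1) % r = 0) ∧
          ∃ s < r, x = ζ ^ (u * (t + s * r ^ (e - 1)))}) : ℕ) : ℝ)
      ≤ (l : ℝ) / r + ((r : ℝ) - 1) * l / r ^ (n - e + 2) := by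
  obtain ⟨hi, -⟩ := Finset.mem_Icc.1 hi
  obtain ⟨-, hen⟩ := Finset.mem_Icc.1 he
  obtain ⟨j, rfl⟩ : ∃ j, i = j + 1 := ⟨i - 1, by omega⟩
  obtain ⟨d, rfl⟩ : ∃ d, e = j + 2 + d := ⟨e - (j + 2), by omega⟩
  obtain ⟨c, rfl⟩ : ∃ c, n = j + 2 + d + c := ⟨n - (j + 2 + d), by omega⟩
  obtain ⟨k, rfl⟩ : ∃ k, r = k + 1 := ⟨r - 1, by omega⟩
  have hp : 0 < (k + 1) ^ j := by positivity
  have he₁ : j + 2 + d - 1 = j + 1 + d := by omega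
  have he₂ : j + 2 + d + c - (j + 2 + d) + 2 = c + 2 := by omega
  rw [he₁, he₂, Nat.add_sub_cancel]
  have key := finrank_span_pow_le_of_digit_eq_zero (B := B) (r := k + 1)
    (K := (k + 1) ^ (1 + d + c) + k * (k + 1) ^ d) hp ζ (fun m => u * m)
    (S := {x : F | ∃ t, (t < l ∧ t / (k + 1) ^ j % (k + 1) = 0) ∧
          ∃ s < k + 1, x = ζ ^ (u * (t + s * (k + 1) ^ (j + 1 + d)))}) (by
      rintro y ⟨t, ⟨ht, hd⟩, s, hs, rfl⟩
      refine ⟨t + s * (k + 1) ^ (j + 1 + d), ?_, ?_, rfl⟩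
      · calc t + s * (k + 1) ^ (j + 1 + d) < l + k * (k + 1) ^ (j + 1 + d) :=
              add_lt_add_of_lt_of_le ht (Nat.mul_le_mul_right _ (by omega))
          _ = _ := by rw [hl]; ring
      · have : s * (k + 1) ^ (j + 1 + d) = (k + 1) ^ j * ((k + 1) * (s * (k + 1) ^ d)) := by ring
        rw [this, Nat.add_mul_div_left _ _ hp, Nat.add_mul_mod_self_left, hd])
  refine (Nat.cast_le.2 key).trans (le_of_eq ?_)
  have hk : (k : ℝ) + 1 ≠ 0 := by positivity
  rw [hl]
  push_cast
  field_simp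
  ring
end

section
/- Let u be a positive integer with u dividing q−1 and α ∈ B an element of multiplicative order exactly u. Then the n̄·u field elements α_{i,j} = ζ^{r̄^{i−1}} · α^j, for i ∈ {1, ..., n̄} and j ∈ {1, ..., u}, are pairwise distinct (so the evaluation-point sets A_1, ..., A_{n̄} of Construction 1 are pairwise disjoint). -/
/-- A strict form of Bernoulli's inequality `l * (q - 1) ≤ q ^ l - 1`. -/
theorem mul_pred_lt_pow_pred {q l m : ℕ} (hq : 1 < q) (hm : m < l) :
    m * (q - 1) < q ^ l - 1 := by
  obtain ⟨d, rfl⟩ : ∃ d, q = 1 + d := ⟨q - 1, by omega⟩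
  have bernoulli : 1 + l * d ≤ (1 + d) ^ l := by
    exact_mod_cast one_add_mul_le_pow (show (-2 : ℤ) ≤ d by omega) l
  have hlt : m * d < l * d := Nat.mul_lt_mul_of_pos_right hm (by omega)
  rw [Nat.add_sub_cancel_left]
  omega

/-- The powers `x ^ j` with `1 ≤ j ≤ orderOf x` are pairwise distinct. -/
theorem pow_injOn_Icc_one_orderOf {M : Type*} [LeftCancelMonoid M] (x : M) :
    Set.InjOn (fun j : ℕ => x ^ j) (Set.Icc 1 (orderOf x)) := by
  rintro i ⟨hi, hi'⟩ j ⟨hj, hj'⟩ h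
  obtain ⟨i, rfl⟩ := Nat.exists_eq_add_of_le hi
  obtain ⟨j, rfl⟩ := Nat.exists_eq_add_of_le hj
  have h' : x ^ i = x ^ j := by simpa [pow_add] using h
  rw [pow_injOn_Iio_orderOf (show i < orderOf x by omega) (show j < orderOf x by omega) h']

/-- **evaluation points of Construction 1 are distinct.** Let
`B = GF(q)`, `l = r^n` (`n, r ≥ 2`), `F = GF(q^l)`, `ζ` a primitive element of
`F`, `u > 0` a divisor of `q - 1`, and `α ∈ B` of multiplicative order exactly
`u`.  Then the `n·u` elements `α_{i,j} = ζ^{r^(i-1)} · α^j` for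
`i ∈ {1, …, n}`, `j ∈ {1, …, u}` are pairwise distinct. -/
theorem stmt_7 (q n r l : ℕ) (hn : 2 ≤ n) (hr : 2 ≤ r) (hl : l = r ^ n)
    (B F : Type*) [Field B] [Field F] [Fintype B] [Fintype F] [Algebra B F]
    (hq : Fintype.card B = q) (hrk : Module.finrank B F = l)
    (ζ : F) (hζ : orderOf ζ = q ^ l - 1)
    (u : ℕ) (hu : 0 < u) (hdvd : u ∣ q - 1)
    (α : B) (hα : orderOf α = u) :
    Set.InjOn (fun ij : ℕ × ℕ => ζ ^ r ^ (ij.1 - 1) * (algebraMap B F α) ^ ij.2)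
      (↑(Finset.Icc 1 n ×ˢ Finset.Icc 1 u) : Set (ℕ × ℕ)) := by
  have hq1 : 1 < q := hq ▸ Fintype.one_lt_card
  have hα0 : α ≠ 0 := by
    rintro rfl
    rw [orderOf_zero] at hα
    omega
  have hA0 : algebraMap B F α ≠ 0 := by simpa using hα0
  have hζ0 : ζ ≠ 0 := by
    rintro rfl
    have := mul_pred_lt_pow_pred (m := 0) hq1 (show 0 < l by rw [hl]; positivity)
    rw [orderOf_zero] at hζ
    omega
  have hα1 : (algebraMap B F α) ^ (q - 1) = 1 := by
    rw [← map_pow, orderOf_dvd_iff_pow_eq_one.mp (hα ▸ hdvd), map_one]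
  have hexp : ∀ i ∈ Set.Icc 1 n, r ^ (i - 1) * (q - 1) < orderOf ζ := by
    rintro i ⟨h1, h2⟩
    rw [hζ]
    refine mul_pred_lt_pow_pred hq1 ?_
    rw [hl]
    exact Nat.pow_lt_pow_right (by omega) (by omega)
  rintro ⟨i, j⟩ hij ⟨i', j'⟩ hij' h
  simp only [Finset.coe_product, Finset.coe_Icc, Set.mem_prod] at hij hij' h
  have hii : i = i' := by
    have hpow : ζ ^ (r ^ (i - 1) * (q - 1)) = ζ ^ (r ^ (i' - 1) * (q - 1)) := by
      have := congrArg (· ^ (q - 1)) h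
      simpa only [mul_pow, pow_right_comm _ _ (q - 1), hα1, one_pow, mul_one,
        ← pow_mul, mul_comm (q - 1)] using this
    have heq := pow_injOn_Iio_orderOf (hexp i hij.1) (hexp i' hij'.1) hpow
    have := Nat.pow_right_injective hr (Nat.eq_of_mul_eq_mul_right (by omega) heq)
    have h1 := hij.1.1
    have h2 := hij'.1.1
    omega
  subst hii
  have hpowj := mul_left_cancel₀ (pow_ne_zero _ hζ0) h
  have hj : α ^ j = α ^ j' := (algebraMap B F).injective (by simpa using hpowj)
  subst hα
  have hv : orderOf (Units.mk0 α hα0) = orderOf α := by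
    rw [← orderOf_units, Units.val_mk0]
  have hjj : j = j' := pow_injOn_Icc_one_orderOf (Units.mk0 α hα0) (by rw [hv]; exact hij.2)
    (by rw [hv]; exact hij'.2) (Units.ext (by simpa using hj))
  rw [hjj]
end

section
/- Let w ∈ {0, ..., n'−1} and y ∈ {1, ..., m} satisfy wm+y+m−1 ≤ n'm. Then {s·d_{w,y} : s ∈ {0, 1, ..., r̄−1}} equals the set of all a ∈ {0, ..., l−1} whose multi-base digits at every position outside {wm+y, wm+y+1, ..., wm+y+m−1} are 0. -/
/-- `∏_{j=1}^{y-1} p_j` (the empty product is `1`). -/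
def bigP (p : ℕ → ℕ) (y : ℕ) : ℕ := ∏ j ∈ Finset.Icc 1 (y - 1), p j

/-- `d_{w,y} = r^w · ∏_{j=1}^{y-1} p_j`. -/
def dwy (p : ℕ → ℕ) (r w y : ℕ) : ℕ := r ^ w * bigP p y

/-- The digit of `t` at position `pos = w·m + y` (`1 ≤ y ≤ m`) in the multi-base
expansion `t = Σ_{w,y} t_{wm+y} · d_{w,y}`, namely `(t / d_{w,y}) % p_y`. -/
def digit (p : ℕ → ℕ) (m r t pos : ℕ) : ℕ :=
  t / dwy p r ((pos - 1) / m) ((pos - 1) % m + 1) % p ((pos - 1) % m + 1)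

/-- The weight of the digit with zero-based position `k` (that is, position `k + 1`). -/
def weight (p : ℕ → ℕ) (m r k : ℕ) : ℕ := dwy p r (k / m) (k % m + 1)

lemma weight_succ {p : ℕ → ℕ} {m r : ℕ} (hm : 0 < m) (hr : r = ∏ i ∈ Finset.Icc 1 m, p i)
    (k : ℕ) : weight p m r (k + 1) = weight p m r k * p (k % m + 1) := by
  have hlt := Nat.mod_lt k hm
  have hk := Nat.div_add_mod k m
  rcases Nat.lt_or_ge (k % m + 1) m with h | h
  · obtain ⟨hdiv, hmod⟩ := (Nat.div_mod_unique (a := k + 1) (c := k % m + 1) (d := k / m) hm).2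
      ⟨by omega, h⟩
    simp only [weight, dwy, bigP, hdiv, hmod, Nat.add_sub_cancel]
    rw [Finset.prod_Icc_succ_top (by omega), mul_assoc]
  · have hkm : k % m + 1 = m := by omega
    obtain ⟨hdiv, hmod⟩ := (Nat.div_mod_unique (a := k + 1) (c := 0) (d := k / m + 1) hm).2
      ⟨by rw [mul_add]; omega, hm⟩
    have hprod : r = (∏ j ∈ Finset.Icc 1 (k % m), p j) * p (k % m + 1) := by
      rw [← Finset.prod_Icc_succ_top (by omega), hkm, hr]
    simp only [weight, dwy, bigP, hdiv, hmod, Nat.add_sub_cancel]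
    rw [mul_assoc, ← hprod, pow_succ]
    simp

lemma weight_dvd_weight {p : ℕ → ℕ} {m r : ℕ} (hm : 0 < m)
    (hr : r = ∏ i ∈ Finset.Icc 1 m, p i) {j k : ℕ} (hjk : j ≤ k) :
    weight p m r j ∣ weight p m r k := by
  induction k, hjk using Nat.le_induction with
  | base => exact dvd_rfl
  | succ k _ ih => exact ih.trans (weight_succ hm hr k ▸ Nat.dvd_mul_right _ _)

lemma weight_add_self {p : ℕ → ℕ} {m r : ℕ} (hm : 0 < m) (k : ℕ) :
    weight p m r (k + m) = weight p m r k * r := by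
  simp only [weight, dwy, Nat.add_div_right k hm, Nat.add_mod_right]
  ring

lemma weight_mul_self {p : ℕ → ℕ} {m r : ℕ} (hm : 0 < m) (n : ℕ) :
    weight p m r (n * m) = r ^ n := by
  simp [weight, dwy, bigP, Nat.mul_div_cancel n hm]

lemma weight_pos {p : ℕ → ℕ} {m r : ℕ} (hm : 0 < m) (hr : r = ∏ i ∈ Finset.Icc 1 m, p i)
    (hp : ∀ i ∈ Finset.Icc 1 m, 0 < p i) (k : ℕ) : 0 < weight p m r k := by
  have hlt := Nat.mod_lt k hm
  refine Nat.mul_pos (Nat.pow_pos (hr ▸ Finset.prod_pos hp)) (Finset.prod_pos fun i hi => ?_)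
  rw [Finset.mem_Icc] at hi
  exact hp i (Finset.mem_Icc.2 ⟨hi.1, by omega⟩)

lemma digit_succ (p : ℕ → ℕ) (m r a k : ℕ) :
    digit p m r a (k + 1) = a / weight p m r k % p (k % m + 1) := rfl

/-- A number is a multiple of a weight as soon as all its lower digits vanish. -/
lemma weight_dvd_of_digit_eq_zero {p : ℕ → ℕ} {m r a : ℕ} (hm : 0 < m)
    (hr : r = ∏ i ∈ Finset.Icc 1 m, p i) {K : ℕ}
    (h : ∀ k < K, digit p m r a (k + 1) = 0) : weight p m r K ∣ a := by
  induction K with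
  | zero => simp [weight, dwy, bigP]
  | succ K ih =>
    have hdvd := ih fun k hk => h k (by omega)
    rw [weight_succ hm hr]
    have hq := Nat.dvd_of_mod_eq_zero (digit_succ p m r a K ▸ h K (by omega))
    exact Nat.mul_dvd_of_dvd_div hdvd hq

/-- A number is smaller than a weight as soon as all its digits from there on vanish. -/
lemma lt_weight_of_digit_eq_zero {p : ℕ → ℕ} {m r a : ℕ} (hm : 0 < m)
    (hr : r = ∏ i ∈ Finset.Icc 1 m, p i) (hp : ∀ i ∈ Finset.Icc 1 m, 0 < p i)
    {J N : ℕ} (hJN : J ≤ N) (ha : a < weight p m r N)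
    (h : ∀ k, J ≤ k → k < N → digit p m r a (k + 1) = 0) : a < weight p m r J := by
  induction N, hJN using Nat.le_induction with
  | base => exact ha
  | succ N hJN ih =>
    refine ih ?_ fun k hJk hkN => h k hJk (by omega)
    have hzero := h N hJN (by omega)
    rw [digit_succ, Nat.mod_eq_of_lt] at hzero
    · exact (Nat.div_eq_zero_iff_lt (weight_pos hm hr hp N)).1 hzero
    · exact Nat.div_lt_of_lt_mul (weight_succ hm hr N ▸ ha)

/-- Let `p 1, …, p m` be primes (`m ≥ 2`), `r = p 1 ⋯ p m`,
`n' ≥ 2`, `l = r^{n'}`.  For `w ∈ {0, …, n'-1}` and `y ∈ {1, …, m}` with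
`wm + y + m - 1 ≤ n'm`, the set `{s·d_{w,y} : 0 ≤ s ≤ r-1}` equals the set of
all `a ∈ {0, …, l-1}` whose multi-base digits at every position (in `{1,…,n'm}`)
outside `{wm+y, …, wm+y+m-1}` vanish. -/
theorem stmt_9 (m : ℕ) (hm : 2 ≤ m) (p : ℕ → ℕ)
    (hp : ∀ i ∈ Finset.Icc 1 m, (p i).Prime)
    (r : ℕ) (hr : r = ∏ i ∈ Finset.Icc 1 m, p i)
    (n' : ℕ) (hn' : 2 ≤ n') (l : ℕ) (hl : l = r ^ n')
    (w y : ℕ) (hw : w < n') (hy : y ∈ Finset.Icc 1 m)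
    (hpos : w * m + y + m - 1 ≤ n' * m) :
    {a : ℕ | ∃ s < r, a = s * dwy p r w y}
      = {a : ℕ | a < l ∧ ∀ pos, 1 ≤ pos → pos ≤ n' * m →
          (pos < w * m + y ∨ w * m + y + m ≤ pos) → digit p m r a pos = 0} := by
  have hm0 : 0 < m := by omega
  have hp0 : ∀ i ∈ Finset.Icc 1 m, 0 < p i := fun i hi => (hp i hi).pos
  rw [Finset.mem_Icc] at hy
  obtain ⟨x, rfl⟩ := Nat.exists_eq_add_of_le' hy.1
  set K := w * m + x with hK
  have hd : dwy p r w (x + 1) = weight p m r K := by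
    obtain ⟨hdiv, hmod⟩ := (Nat.div_mod_unique (a := K) (c := x) (d := w) hm0).2
      ⟨by rw [hK, mul_comm m w, add_comm], by omega⟩
    rw [weight, hdiv, hmod]
  have hKN : K + m ≤ n' * m := by omega
  rw [hd, hl, ← weight_mul_self (p := p) hm0 n']
  ext a
  constructor
  · rintro ⟨s, hs, rfl⟩
    have hlt : s * weight p m r K < weight p m r (K + m) := by
      rw [weight_add_self hm0, mul_comm]
      exact Nat.mul_lt_mul_of_pos_left hs (weight_pos hm0 hr hp0 K)
    have hlt_of_le : ∀ k, K + m ≤ k → s * weight p m r K < weight p m r k := fun k hk =>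
      hlt.trans_le (Nat.le_of_dvd (weight_pos hm0 hr hp0 k) (weight_dvd_weight hm0 hr hk))
    refine ⟨hlt_of_le _ hKN, fun pos hpos1 _ hout => ?_⟩
    obtain ⟨k, rfl⟩ := Nat.exists_eq_add_of_le' hpos1
    rw [digit_succ]
    rcases hout with hlow | hhigh
    · have hdvd : weight p m r (k + 1) ∣ s * weight p m r K :=
        (weight_dvd_weight hm0 hr (by omega)).trans (Nat.dvd_mul_left _ _)
      rw [weight_succ hm0 hr] at hdvd
      exact Nat.mod_eq_zero_of_dvd (Nat.dvd_div_of_mul_dvd hdvd)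
    · rw [Nat.div_eq_of_lt (hlt_of_le k (by omega)), Nat.zero_mod]
  · rintro ⟨ha, hdigit⟩
    obtain ⟨s, rfl⟩ := weight_dvd_of_digit_eq_zero (a := a) (K := K) hm0 hr
      fun k hk => hdigit (k + 1) (by omega) (by omega) (Or.inl (by omega))
    have hlt := lt_weight_of_digit_eq_zero hm0 hr hp0 hKN ha
      fun k hk hkN => hdigit (k + 1) (by omega) (by omega) (Or.inr (by omega))
    rw [weight_add_self hm0] at hlt
    exact ⟨s, Nat.lt_of_mul_lt_mul_left hlt, mul_comm _ _⟩
end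

section
/- Let u be a positive divisor of q−1. For every y ∈ {1, ..., m}, rank_B({ζ^{u(t + s·d_{n'−1,y})} : t ∈ T_{n'−1,y}, s ∈ {0, ..., r̄−1}}) = l; i.e., these l field elements form a basis of F over B. -/
/-- `T_{n'-1,y}`: the `t ∈ {0,…,l-1}` whose digits at positions
`(n'-1)m+y, …, n'm` and at positions `1, …, y-1` all vanish. -/
def Ttop (p : ℕ → ℕ) (m r n' l y : ℕ) : Set ℕ :=
  {t : ℕ | t < l ∧
    (∀ pos, (n' - 1) * m + y ≤ pos → pos ≤ n' * m → digit p m r t pos = 0) ∧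
    (∀ pos, 1 ≤ pos → pos ≤ y - 1 → digit p m r t pos = 0)}

/-- A finite-field element whose order is too large for a proper subfield has full degree. -/
theorem natDegree_minpoly_of_orderOf_pow {B F : Type*} [Field B] [Field F] [Fintype B]
    [Fintype F] [Algebra B F] {ζ : F}
    (hζ : orderOf ζ = Fintype.card B ^ Module.finrank B F - 1) {a : ℕ} (ha : 0 < a)
    (hlt : ∀ k, 2 * k ≤ Module.finrank B F →
      a * (Fintype.card B ^ k - 1) < Fintype.card B ^ Module.finrank B F - 1) :
    (minpoly B (ζ ^ a)).natDegree = Module.finrank B F := by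
  have hB : 1 < Fintype.card B := Fintype.one_lt_card
  have hF : 0 < Module.finrank B F := Module.finrank_pos
  have hζ0 : ζ ≠ 0 := by
    rintro rfl
    have h0 := Nat.one_lt_pow hF.ne' hB
    have h1 : 0 < orderOf (0 : F) := by omega
    have h2 := pow_orderOf_eq_one (0 : F)
    rw [zero_pow h1.ne'] at h2
    exact zero_ne_one h2
  set β := ζ ^ a with hβ
  have hβ0 : β ≠ 0 := pow_ne_zero _ hζ0
  have hint : IsIntegral B β := IsIntegral.of_finite B β
  rw [← IntermediateField.adjoin.finrank hint]
  set K := IntermediateField.adjoin B {β}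
  set k := Module.finrank B K with hk
  have hmul : k * Module.finrank K F = Module.finrank B F := Module.finrank_mul_finrank B K F
  have hkpos : 0 < k := Module.finrank_pos
  by_contra hne
  have h2k : 2 * k ≤ Module.finrank B F := by
    have : 2 ≤ Module.finrank K F := by
      by_contra hc
      have : Module.finrank K F = 0 ∨ Module.finrank K F = 1 := by omega
      rcases this with h | h <;> rw [h] at hmul <;> omega
    nlinarith
  have hpow : β ^ (Fintype.card B ^ k - 1) = 1 := by
    have := Fintype.ofFinite K
    have hcard : Fintype.card K = Fintype.card B ^ k := Module.card_eq_pow_finrank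
    have hmem : β ∈ K := IntermediateField.mem_adjoin_simple_self B β
    have h := FiniteField.pow_card_sub_one_eq_one (⟨β, hmem⟩ : K)
      (fun h => hβ0 (congrArg Subtype.val h))
    rw [hcard] at h
    exact congrArg Subtype.val h
  rw [hβ, ← pow_mul] at hpow
  have hdvd := orderOf_dvd_of_pow_eq_one hpow
  rw [hζ] at hdvd
  have := Nat.le_of_dvd
    (Nat.mul_pos ha (Nat.sub_pos_of_lt (Nat.one_lt_pow hkpos.ne' hB))) hdvd
  exact absurd (hlt k h2k) (by omega)

/-- If `β` has full degree, its powers below the degree span. -/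
theorem span_pow_eq_top_of_natDegree_minpoly {B F : Type*} [Field B] [Field F] [Algebra B F]
    [FiniteDimensional B F] {β : F} (h : (minpoly B β).natDegree = Module.finrank B F) :
    Submodule.span B (Set.range fun i : Fin (Module.finrank B F) => β ^ (i : ℕ)) = ⊤ := by
  have hli := linearIndependent_pow (K := B) β
  rw [h] at hli
  exact hli.span_eq_top_of_card_eq_finrank' (by simp)

theorem bigP_dvd_bigP (p : ℕ → ℕ) {a b : ℕ} (hab : a ≤ b) : bigP p a ∣ bigP p b :=
  Finset.prod_dvd_prod_of_subset _ _ _ (Finset.Icc_subset_Icc_right (by omega))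

theorem bigP_succ (p : ℕ → ℕ) {j : ℕ} (hj : 1 ≤ j) : bigP p (j + 1) = bigP p j * p j := by
  obtain ⟨i, rfl⟩ := Nat.exists_eq_add_of_le' hj
  simp [bigP, Finset.prod_Icc_succ_top]

theorem bigP_pos {p : ℕ → ℕ} {m y : ℕ} (hp : ∀ i ∈ Finset.Icc 1 m, 0 < p i)
    (hy : y ≤ m + 1) : 0 < bigP p y :=
  Finset.prod_pos fun i hi => hp i (Finset.Icc_subset_Icc_right (by omega) hi)

/-- The multiples of `bigP p y` below `d_{n'-1,y}` belong to `T_{n'-1,y}`. -/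
theorem bigP_mul_mem_Ttop {p : ℕ → ℕ} {m n' y c : ℕ} (hp : ∀ i ∈ Finset.Icc 1 m, 0 < p i)
    (hn' : 1 ≤ n') (hy1 : 1 ≤ y) (hym : y ≤ m) (hc : c < bigP p (m + 1) ^ (n' - 1)) :
    bigP p y * c ∈ Ttop p m (bigP p (m + 1)) n' (bigP p (m + 1) ^ n') y := by
  have hP := bigP_pos hp (show y ≤ m + 1 by omega)
  have hr := bigP_pos hp le_rfl
  have htd : bigP p y * c < bigP p (m + 1) ^ (n' - 1) * bigP p y := by
    rw [mul_comm]; exact Nat.mul_lt_mul_of_pos_right hc hP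
  refine ⟨htd.trans_le ?_, fun pos h1 h2 => ?_, fun pos h1 h2 => ?_⟩
  · calc _ ≤ bigP p (m + 1) ^ (n' - 1) * bigP p (m + 1) :=
          Nat.mul_le_mul_left _ (Nat.le_of_dvd hr (bigP_dvd_bigP p (by omega)))
      _ = _ := by rw [← pow_succ, Nat.sub_add_cancel hn']
  · obtain ⟨w, rfl⟩ := Nat.exists_eq_add_of_le' hn'
    simp only [Nat.add_sub_cancel] at h1 htd
    obtain ⟨e, rfl⟩ := Nat.exists_eq_add_of_le (show w * m + 1 ≤ pos by omega)
    have he : e < m := by rw [add_mul] at h2; omega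
    have hdm : w * m + 1 + e - 1 = e + m * w := by rw [mul_comm]; omega
    rw [digit, hdm, Nat.add_mul_div_left _ _ (by omega), Nat.add_mul_mod_self_left,
      Nat.div_eq_of_lt he, Nat.mod_eq_of_lt he, zero_add, Nat.div_eq_of_lt, Nat.zero_mod]
    exact htd.trans_le (Nat.mul_le_mul_left _
      (Nat.le_of_dvd (bigP_pos hp (by omega)) (bigP_dvd_bigP p (by omega))))
  · have hlt : pos - 1 < m := by omega
    rw [digit, Nat.div_eq_of_lt hlt, Nat.mod_eq_of_lt hlt, Nat.sub_add_cancel h1, dwy, pow_zero,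
      one_mul]
    obtain ⟨e, he⟩ := bigP_dvd_bigP p (show pos + 1 ≤ y by omega)
    rw [he, bigP_succ p h1, mul_assoc, mul_assoc,
      Nat.mul_div_cancel_left _ (bigP_pos hp (by omega)), Nat.mul_mod_right]

theorem mul_pow_sub_one_lt_pow_sub_one {q u P r l k : ℕ} (hq : 2 ≤ q) (hu : u ≤ q)
    (hP : P ≤ r) (hl : 2 * r + 2 ≤ l) (hk : 2 * k ≤ l) :
    u * P * (q ^ k - 1) < q ^ l - 1 := by
  have h1 : P < q ^ r := hP.trans_lt (Nat.lt_pow_self hq)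
  have h2 : 0 < q ^ k := by positivity
  have h3 : u * P * q ^ k < q ^ l :=
    calc u * P * q ^ k ≤ q * P * q ^ k := by gcongr
      _ < q * q ^ r * q ^ k := by gcongr
      _ = q ^ (1 + r + k) := by ring
      _ ≤ q ^ l := Nat.pow_le_pow_right (by omega) (by omega)
  rcases Nat.eq_zero_or_pos (u * P) with h0 | h0
  · rw [h0, zero_mul]
    have := Nat.one_lt_pow (show l ≠ 0 by omega) (show 1 < q by omega)
    omega
  · rw [Nat.mul_sub, mul_one]
    have : u * P ≤ u * P * q ^ k := Nat.le_mul_of_pos_right _ h2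
    omega


/-- **Proposition 12.** Let `B = GF(q)`, let `p 1, …, p m` be primes
(`m ≥ 2`), `r = p 1 ⋯ p m`, `n' ≥ 2`, `l = r^{n'}`, `F = GF(q^l)`, `ζ` a primitive
element of `F`, and `u > 0` a divisor of `q - 1`.  For every `y ∈ {1, …, m}`, the
`l` elements `ζ^{u(t + s·d_{n'-1,y})}`, `t ∈ T_{n'-1,y}`, `s ∈ {0, …, r-1}`,
form a basis of `F` over `B`, i.e. their `B`-rank is `l`. -/
theorem stmt_10 (q m : ℕ) (hm : 2 ≤ m) (p : ℕ → ℕ)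
    (hp : ∀ i ∈ Finset.Icc 1 m, (p i).Prime)
    (r : ℕ) (hr : r = ∏ i ∈ Finset.Icc 1 m, p i)
    (n' : ℕ) (hn' : 2 ≤ n') (l : ℕ) (hl : l = r ^ n')
    (B F : Type*) [Field B] [Field F] [Fintype B] [Fintype F] [Algebra B F]
    (hq : Fintype.card B = q) (hrk : Module.finrank B F = l)
    (ζ : F) (hζ : orderOf ζ = q ^ l - 1)
    (u : ℕ) (hu : 0 < u) (hdvd : u ∣ q - 1)
    (y : ℕ) (hy : y ∈ Finset.Icc 1 m) :
    Module.finrank B ↥(Submodule.span B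
      {x : F | ∃ t ∈ Ttop p m r n' l y,
        ∃ s < r, x = ζ ^ (u * (t + s * dwy p r (n' - 1) y))}) = l := by
  obtain ⟨hy1, hym⟩ := Finset.mem_Icc.mp hy
  have hp0 : ∀ i ∈ Finset.Icc 1 m, 0 < p i := fun i hi => (hp i hi).pos
  have hrP : r = bigP p (m + 1) := hr
  have hP0 : 0 < bigP p y := bigP_pos hp0 (by omega)
  have hr4 : 4 ≤ r := by
    calc 4 = 2 ^ 2 := rfl
      _ ≤ 2 ^ m := Nat.pow_le_pow_right (by omega) hm
      _ ≤ r := by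
        rw [hr]
        simpa using Finset.pow_card_le_prod (Finset.Icc 1 m) p 2 fun i hi => (hp i hi).two_le
  have hPr : bigP p y ≤ r := by
    rw [hrP]
    exact Nat.le_of_dvd (by omega) (bigP_dvd_bigP p (by omega))
  have hlr : 2 * r + 2 ≤ l := by
    have : r ^ 2 ≤ l := hl ▸ Nat.pow_le_pow_right (by omega) hn'
    nlinarith
  have hq2 : 2 ≤ q := hq ▸ Fintype.one_lt_card
  have huq : u ≤ q := (Nat.le_of_dvd (by omega) hdvd).trans (Nat.sub_le _ _)
  have hdeg : (minpoly B (ζ ^ (u * bigP p y))).natDegree = Module.finrank B F := by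
    apply natDegree_minpoly_of_orderOf_pow
    · rw [hq, hrk, hζ]
    · positivity
    · intro k hk
      rw [hrk] at hk ⊢
      rw [hq]
      exact mul_pow_sub_one_lt_pow_sub_one hq2 huq hPr hlr hk
  have htop := span_pow_eq_top_of_natDegree_minpoly hdeg
  have hpow : r ^ n' = r ^ (n' - 1) * r := by rw [← pow_succ, Nat.sub_add_cancel (by omega)]
  refine (congrArg (fun S : Submodule B F => Module.finrank B S)
    (top_le_iff.mp (htop ▸ Submodule.span_mono ?_))).trans (finrank_top B F |>.trans hrk)
  rintro _ ⟨i, rfl⟩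
  have hi : (i : ℕ) < r ^ (n' - 1) * r := by rw [← hpow, ← hl, ← hrk]; exact i.isLt
  refine ⟨bigP p y * (i % r ^ (n' - 1)), ?_, i / r ^ (n' - 1), Nat.div_lt_of_lt_mul hi, ?_⟩
  · subst hl
    rw [hrP]
    exact bigP_mul_mem_Ttop hp0 (by omega) hy1 hym (Nat.mod_lt _ (by rw [← hrP]; positivity))
  · beta_reduce
    rw [dwy, ← pow_mul]
    congr 1
    conv_lhs => rw [← Nat.mod_add_div i (r ^ (n' - 1))]
    ring
end

section
/- Let u be a positive divisor of q−1 and y ∈ {1, ..., m}. Then the element γ = ζ^{u·∏_{j=1}^{y−1} p_j} of F satisfies B(γ) = F; equivalently, the minimal polynomial of γ over B has degree l, so the powers 1, γ, γ^2, ..., γ^{l−1} are linearly independent over B. -/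
/-- In an extension of a finite field `B`, an element whose minimal polynomial has degree `d` is
fixed by the `#B ^ d`-power map. -/
theorem pow_card_pow_natDegree_minpoly {B F : Type*} [Field B] [Field F] [Fintype B] [Fintype F]
    [Algebra B F] (x : F) :
    x ^ (Fintype.card B ^ (minpoly B x).natDegree) = x := by
  have hx : IsIntegral B x := .of_finite B x
  have : Fintype (IntermediateField.adjoin B {x}) := Fintype.ofFinite _
  have h := FiniteField.pow_card (IntermediateField.AdjoinSimple.gen B x)
  rw [Module.card_eq_pow_finrank (K := B), IntermediateField.adjoin.finrank hx] at h
  simpa using congrArg (algebraMap (IntermediateField.adjoin B {x}) F) h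

/-- If `2 * d ≤ l`, `u < q`, `P ≤ r` and `16 ≤ r ^ 2 ≤ l`, then `u * P * (q ^ d - 1)` stays below
`q ^ l - 1`. -/
theorem mul_pow_sub_one_lt {q r l d u P : ℕ} (hq : 2 ≤ q) (hr : 4 ≤ r) (hl : r ^ 2 ≤ l)
    (hd : 2 * d ≤ l) (hu : u < q) (hP : P ≤ r) :
    u * P * (q ^ d - 1) < q ^ l - 1 := by
  have hPq : P ≤ q ^ r := hP.trans (Nat.lt_pow_self hq).le
  have hexp : 1 + r + d + 1 ≤ l := by nlinarith
  have hle : u * P * (q ^ d - 1) ≤ q ^ (1 + r + d) := by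
    rw [pow_add, pow_add, pow_one]
    gcongr
    omega
  have hpow : q ^ (1 + r + d + 1) ≤ q ^ l := Nat.pow_le_pow_right (by omega) hexp
  have hbase : q ^ 2 ≤ q ^ (1 + r + d) := Nat.pow_le_pow_right (by omega) (by omega)
  rw [pow_succ] at hpow
  have : 2 ≤ q ^ (1 + r + d) := by nlinarith
  have : q ^ (1 + r + d) * 2 ≤ q ^ (1 + r + d) * q := by gcongr
  omega


/-- Let `B = GF(q)`, let `p 1, …, p m` be primes (`m ≥ 2`),
`r = p 1 ⋯ p m`, `n' ≥ 2`, `l = r^{n'}`, `F = GF(q^l)`, and `ζ` a primitive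
element of `F`.  If `u > 0` divides `q - 1` and `y ∈ {1, …, m}`, then
`γ = ζ^{u·∏_{j=1}^{y-1} p_j}` generates `F` over `B`: the minimal polynomial of
`γ` over `B` has degree `l` (equivalently `B(γ) = F`, so `1, γ, …, γ^{l-1}` are
linearly independent over `B`). -/
theorem stmt_11 (q m : ℕ) (hm : 2 ≤ m) (p : ℕ → ℕ)
    (hp : ∀ i ∈ Finset.Icc 1 m, (p i).Prime)
    (r : ℕ) (hr : r = ∏ i ∈ Finset.Icc 1 m, p i)
    (n' : ℕ) (hn' : 2 ≤ n') (l : ℕ) (hl : l = r ^ n')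
    (B F : Type*) [Field B] [Field F] [Fintype B] [Fintype F] [Algebra B F]
    (hq : Fintype.card B = q) (hrk : Module.finrank B F = l)
    (ζ : F) (hζ : orderOf ζ = q ^ l - 1)
    (u : ℕ) (hu : 0 < u) (hdvd : u ∣ q - 1)
    (y : ℕ) (hy : y ∈ Finset.Icc 1 m) :
    (minpoly B (ζ ^ (u * bigP p y))).natDegree = l ∧
      Algebra.adjoin B {ζ ^ (u * bigP p y)} = ⊤ := by
  obtain ⟨hy1, hym⟩ := Finset.mem_Icc.mp hy
  set γ := ζ ^ (u * bigP p y) with hγ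
  have hq2 : 2 ≤ q := hq ▸ Fintype.one_lt_card
  have hr4 : 4 ≤ r := by
    calc 4 = 2 ^ 2 := rfl
      _ ≤ 2 ^ (Finset.Icc 1 m).card := Nat.pow_le_pow_right (by omega) (by simpa using hm)
      _ ≤ ∏ i ∈ Finset.Icc 1 m, p i := Finset.pow_card_le_prod _ _ _ fun i hi => (hp i hi).two_le
      _ = r := hr.symm
  have hP : bigP p y ∣ r := by
    rw [hr]
    exact Finset.prod_dvd_prod_of_subset _ _ _ (Finset.Icc_subset_Icc le_rfl (by omega))
  have hPr : bigP p y ≤ r := Nat.le_of_dvd (by omega) hP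
  have hP0 : 0 < bigP p y := Nat.pos_of_dvd_of_pos hP (by omega)
  have hlr : r ^ 2 ≤ l := hl ▸ Nat.pow_le_pow_right (by omega) hn'
  have hl0 : 0 < l := lt_of_lt_of_le (by positivity) hlr
  have hint : IsIntegral B γ := .of_finite B γ
  have hdeg : (minpoly B γ).natDegree = l := by
    by_contra hne
    set d := (minpoly B γ).natDegree
    have hdpos : 0 < d := minpoly.natDegree_pos hint
    have hdl : d ∣ l := hrk ▸ minpoly.degree_dvd hint
    obtain ⟨k, hk⟩ := hdl
    have hk2 : 2 ≤ k := by
      rcases k with _ | _ | k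
      · omega
      · exact absurd (by simpa using hk.symm) hne
      · omega
    have hd2 : 2 * d ≤ l := by nlinarith
    have hql : 1 < q ^ l := Nat.one_lt_pow hl0.ne' hq2
    have hζ0 : ζ ≠ 0 := by
      rintro rfl
      rw [orderOf_zero] at hζ
      omega
    have hγ0 : γ ≠ 0 := pow_ne_zero _ hζ0
    have hfix : γ ^ (q ^ d) = γ := hq ▸ pow_card_pow_natDegree_minpoly (B := B) γ
    have hqd : 1 < q ^ d := Nat.one_lt_pow hdpos.ne' hq2
    have hone : γ ^ (q ^ d - 1) = 1 := by
      apply mul_right_cancel₀ hγ0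
      rw [← pow_succ, Nat.sub_add_cancel hqd.le, hfix, one_mul]
    rw [hγ, ← pow_mul] at hone
    have hdiv := orderOf_dvd_of_pow_eq_one hone
    rw [hζ] at hdiv
    have hle := Nat.le_of_dvd (Nat.mul_pos (Nat.mul_pos hu hP0) (by omega)) hdiv
    have huq : u < q := by
      have := Nat.le_of_dvd (by omega) hdvd
      omega
    exact absurd hle (mul_pow_sub_one_lt hq2 hr4 hlr hd2 huq hPr).not_ge
  refine ⟨hdeg, ?_⟩
  rw [← IntermediateField.adjoin_simple_toSubalgebra_of_isAlgebraic hint.isAlgebraic,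
    (Field.primitive_element_iff_minpoly_natDegree_eq B γ).mpr (hdeg.trans hrk.symm),
    IntermediateField.top_toSubalgebra]
end

section
/- Fix primes p_1, ..., p_m with m ≥ 2 and suppose r̄ := p_1 p_2 ⋯ p_m + 1 is a prime number with r̄ ≥ 5 (so r̄ − 1 = p_1 ⋯ p_m is composite). For each integer n' ≥ 2, consider the Construction-2 data built from p_1, ..., p_m and parameter n' (so n̄ = n'm, l = (r̄−1)^{n'}, with d_{w,y} and T_{w,y} defined with respect to r̄−1), and for any prime power q, any positive divisor u of q−1, and any primitive element ζ of GF(q^l), define for w ∈ {1, ..., n'−1} and y ∈ {1, ..., m} the repair bandwidth b'(n', w, y) = Σ_{(w',z) ≠ (w,y)} rank_{GF(q)}({ζ^{u(t + s·d_{w',z})} : t ∈ T_{w,y}, s ∈ {0, ..., r̄−2}}). Then for every ε > 0 there exists N such that for all n' ≥ N and all such q, u, ζ, w, y: b'(n', w, y) < (r̄/(r̄−1) + ε) · (n̄−1)·l/r̄. In particular, the ratio of b' to the cut-set bound b_min = (n̄−1)l/r̄ tends to r̄/(r̄−1) ≤ 5/4 as n̄ → ∞. -/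
/-- The set `T_{w,y}` of Construction 2: for `w ≤ n'-2` the `t < l` whose digits
at positions `wm+y, …, wm+y+m-1` vanish; for `w = n'-1` the `t < l` whose digits
at positions `(n'-1)m+y, …, n'm` and `1, …, y-1` vanish. -/
def Tset (p : ℕ → ℕ) (m r n' l w y : ℕ) : Set ℕ :=
  if w + 1 < n' then
    {t : ℕ | t < l ∧ ∀ k < m, digit p m r t (w * m + y + k) = 0}
  else
    {t : ℕ | t < l ∧
      (∀ pos, (n' - 1) * m + y ≤ pos → pos ≤ n' * m → digit p m r t pos = 0) ∧
      (∀ pos, 1 ≤ pos → pos ≤ y - 1 → digit p m r t pos = 0)}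

/-- The weight `d_{w,y}` of the zero-based position `i = w·m + y - 1`. -/
def posWeight (p : ℕ → ℕ) (m r i : ℕ) : ℕ := dwy p r (i / m) (i % m + 1)

section PosWeight

variable {p : ℕ → ℕ} {m r : ℕ}

lemma posWeight_zero : posWeight p m r 0 = 1 := by
  simp [posWeight, dwy, bigP]

lemma posWeight_mul_add {w y : ℕ} (hy : 1 ≤ y) (hym : y ≤ m) :
    posWeight p m r (w * m + (y - 1)) = dwy p r w y := by
  have hlt : y - 1 < m := by omega
  have hm : 0 < m := by omega
  have h1 : (w * m + (y - 1)) / m = w := by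
    rw [add_comm, Nat.add_mul_div_right _ _ hm, Nat.div_eq_of_lt hlt, zero_add]
  have h2 : (w * m + (y - 1)) % m = y - 1 := by
    rw [add_comm, Nat.add_mul_mod_self_right, Nat.mod_eq_of_lt hlt]
  rw [posWeight, h1, h2, Nat.sub_add_cancel hy]

lemma posWeight_mul (hm : 0 < m) (w : ℕ) : posWeight p m r (w * m) = r ^ w := by
  have := posWeight_mul_add (p := p) (r := r) (w := w) le_rfl hm
  simpa [dwy, bigP] using this

lemma posWeight_add_self (hm : 0 < m) (i : ℕ) :
    posWeight p m r (i + m) = r * posWeight p m r i := by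
  simp only [posWeight, dwy, Nat.add_div_right _ hm, Nat.add_mod_right, pow_succ]
  ring

lemma posWeight_succ (hm : 0 < m) (hr : r = ∏ i ∈ Finset.Icc 1 m, p i) (i : ℕ) :
    posWeight p m r (i + 1) = posWeight p m r i * p (i % m + 1) := by
  have hlt := Nat.mod_lt i hm
  have hdm := Nat.div_add_mod' i m
  have hbig : bigP p (i % m + 1 + 1) = bigP p (i % m + 1) * p (i % m + 1) := by
    simp only [bigP, Nat.add_sub_cancel]
    exact Finset.prod_Icc_succ_top (by omega) _
  rcases Nat.lt_or_ge (i % m + 1) m with h | h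
  · have := posWeight_mul_add (p := p) (m := m) (r := r) (w := i / m) (y := i % m + 1 + 1)
      (by omega) (by omega)
    rw [Nat.add_sub_cancel, ← add_assoc, hdm] at this
    rw [this, posWeight, dwy, dwy, hbig, mul_assoc]
  · have hk : i % m + 1 = m := by omega
    have hi : i + 1 = (i / m + 1) * m := by
      rw [add_mul, one_mul]; omega
    have hrm : bigP p (i % m + 1) * p (i % m + 1) = r := by
      rw [← hbig, hk, hr, bigP, Nat.add_sub_cancel]
    rw [hi, posWeight_mul hm, posWeight, dwy, mul_assoc, hrm, pow_succ]

lemma posWeight_dvd (hm : 0 < m) (hr : r = ∏ i ∈ Finset.Icc 1 m, p i) {i j : ℕ} (hij : i ≤ j) :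
    posWeight p m r i ∣ posWeight p m r j := by
  induction j, hij using Nat.le_induction with
  | base => exact dvd_rfl
  | succ j _ ih => exact ih.trans (posWeight_succ hm hr j ▸ dvd_mul_right _ _)

lemma two_mul_posWeight_le (hm : 0 < m) (hr : r = ∏ i ∈ Finset.Icc 1 m, p i)
    (hp : ∀ i ∈ Finset.Icc 1 m, (p i).Prime) (i : ℕ) :
    2 * posWeight p m r i ≤ posWeight p m r (i + 1) := by
  have hlt := Nat.mod_lt i hm
  have h2 : 2 ≤ p (i % m + 1) := (hp _ (Finset.mem_Icc.2 ⟨by omega, by omega⟩)).two_le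
  rw [posWeight_succ hm hr, mul_comm]
  exact Nat.mul_le_mul_left _ h2

lemma posWeight_pos (hm : 0 < m) (hr : r = ∏ i ∈ Finset.Icc 1 m, p i)
    (hp : ∀ i ∈ Finset.Icc 1 m, (p i).Prime) (i : ℕ) : 0 < posWeight p m r i := by
  induction i with
  | zero => simp [posWeight_zero]
  | succ i ih => have := two_mul_posWeight_le hm hr hp i; omega

lemma sum_posWeight_le (hm : 0 < m) (hr : r = ∏ i ∈ Finset.Icc 1 m, p i)
    (hp : ∀ i ∈ Finset.Icc 1 m, (p i).Prime) (n : ℕ) :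
    ∑ i ∈ Finset.range n, posWeight p m r i ≤ posWeight p m r n := by
  induction n with
  | zero => simp
  | succ n ih =>
    have := two_mul_posWeight_le hm hr hp n
    rw [Finset.sum_range_succ]; omega

/-- If the `k` digits starting at the zero-based position `i` vanish, then the residues of `t`
modulo the weights of the positions `i` and `i + k` agree. -/
lemma mod_posWeight_add (hm : 0 < m) (hr : r = ∏ i ∈ Finset.Icc 1 m, p i) {t i k : ℕ}
    (h : ∀ j < k, digit p m r t (i + 1 + j) = 0) :
    t % posWeight p m r (i + k) = t % posWeight p m r i := by
  induction k with
  | zero => rfl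
  | succ k ih =>
    have hk := h k (by omega)
    have hpos : i + 1 + k - 1 = i + k := by omega
    rw [digit, hpos] at hk
    rw [← add_assoc, posWeight_succ hm hr, Nat.mod_mul, posWeight, hk, mul_zero, add_zero]
    exact ih fun j hj => h j (by omega)

end PosWeight

/-- A family of powers whose exponents have at most `K` quotients and `R` remainders modulo `M`
spans a space of dimension at most `K * R`. -/
lemma finrank_span_pow_le {B F : Type*} [Field B] [Field F] [Algebra B F] [FiniteDimensional B F]
    (ζ : F) (u : ℕ) (T : Set ℕ) (r d M K R : ℕ)
    (h : ∀ t ∈ T, ∀ s < r, (t + s * d) / M < K ∧ (t + s * d) % M < R) :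
    Module.finrank B ↥(Submodule.span B
      {x : F | ∃ t ∈ T, ∃ s < r, x = ζ ^ (u * (t + s * d))}) ≤ K * R := by
  classical
  let X : Finset F := (Finset.range K ×ˢ Finset.range R).image fun ab => ζ ^ (u * (M * ab.1 + ab.2))
  have hX : {x : F | ∃ t ∈ T, ∃ s < r, x = ζ ^ (u * (t + s * d))} ⊆ (X : Set F) := by
    rintro x ⟨t, ht, s, hs, rfl⟩
    obtain ⟨h1, h2⟩ := h t ht s hs
    refine Finset.mem_coe.2 (Finset.mem_image.2
      ⟨((t + s * d) / M, (t + s * d) % M), by simp [h1, h2], ?_⟩)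
    simp only [Nat.div_add_mod]
  calc _ ≤ Module.finrank B ↥(Submodule.span B (X : Set F)) :=
        Submodule.finrank_mono (Submodule.span_mono hX)
    _ ≤ X.card := finrank_span_finset_le_card X
    _ ≤ _ := Finset.card_image_le.trans (by simp)

/-- An upper bound for the excess over `l / r` of the rank contributed by the node at the zero-based
position `i`, when the node at position `i₀` is repaired. -/
def rankExcess (p : ℕ → ℕ) (m r l i₀ i : ℕ) : ℕ :=
  r * posWeight p m r i
    + (if i < i₀ then l / posWeight p m r i₀ * posWeight p m r i else 0)
    + (if i < i₀ + m ∧ i₀ < i + m then l else 0)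
    + (if i < m then l else 0)

section Excess

variable {p : ℕ → ℕ} {m r : ℕ}

lemma sum_rankExcess_le (hm : 0 < m) (hr : r = ∏ i ∈ Finset.Icc 1 m, p i)
    (hp : ∀ i ∈ Finset.Icc 1 m, (p i).Prime) (n i₀ : ℕ) :
    ∑ i ∈ Finset.range (n * m), rankExcess p m r (r ^ n) i₀ i ≤ (r + 1 + 3 * m) * r ^ n := by
  simp only [rankExcess, Finset.sum_add_distrib, ← Finset.mul_sum, ← Finset.sum_filter]
  have h1 : ∑ i ∈ Finset.range (n * m), posWeight p m r i ≤ r ^ n :=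
    posWeight_mul (p := p) (r := r) hm n ▸ sum_posWeight_le hm hr hp (n * m)
  have h2 : ∑ i ∈ Finset.range (n * m) with i < i₀, posWeight p m r i ≤ posWeight p m r i₀ :=
    (Finset.sum_le_sum_of_subset fun i hi => by simp_all).trans (sum_posWeight_le hm hr hp i₀)
  have h3 : ((Finset.range (n * m)).filter fun i => i < i₀ + m ∧ i₀ < i + m).card ≤ 2 * m := by
    refine (Finset.card_le_card (t := Finset.Ico (i₀ + 1 - m) (i₀ + m)) fun i hi => ?_).trans ?_
    · simp only [Finset.mem_filter, Finset.mem_Ico] at hi ⊢; omega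
    · rw [Nat.card_Ico]; omega
  have h4 : ((Finset.range (n * m)).filter fun i => i < m).card ≤ m := by
    refine (Finset.card_le_card (t := Finset.range m) fun i hi => ?_).trans (by simp)
    simp_all
  have h2' := (Nat.mul_le_mul_left (r ^ n / posWeight p m r i₀) h2).trans (Nat.div_mul_le_self _ _)
  simp only [Finset.sum_const, smul_eq_mul]
  calc _ ≤ r * r ^ n + r ^ n + 2 * m * r ^ n + m * r ^ n := by gcongr
    _ = _ := by ring

variable {B F : Type*} [Field B] [Field F] [Algebra B F] [FiniteDimensional B F]

lemma finrank_span_le_of_not_last (hm : 0 < m) (hr : r = ∏ i ∈ Finset.Icc 1 m, p i)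
    (hp : ∀ i ∈ Finset.Icc 1 m, (p i).Prime) (hr2 : 2 ≤ r) {n : ℕ}
    (hF : Module.finrank B F = r ^ (n + 1)) (ζ : F) (u : ℕ) {i₀ : ℕ} (hi₀ : i₀ + m ≤ (n + 1) * m)
    {T : Set ℕ}
    (hT : ∀ t ∈ T, t < r ^ (n + 1) ∧ ∀ k < m, digit p m r t (i₀ + 1 + k) = 0) (i : ℕ) :
    Module.finrank B ↥(Submodule.span B
      {x : F | ∃ t ∈ T, ∃ s < r, x = ζ ^ (u * (t + s * posWeight p m r i))})
      ≤ r ^ n + rankExcess p m r (r ^ (n + 1)) i₀ i := by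
  have hD := posWeight_pos hm hr hp i₀
  have hd := posWeight_pos hm hr hp i
  have hl := posWeight_mul (p := p) (r := r) hm (n + 1)
  have hrD := posWeight_add_self (p := p) (r := r) hm i₀
  obtain ⟨a, ha⟩ := posWeight_dvd hm hr hi₀
  rw [hl, hrD] at ha
  have hL : r ^ n = a * posWeight p m r i₀ := by
    refine Nat.eq_of_mul_eq_mul_left (show 0 < r by omega) ?_
    rw [← pow_succ', ha]; ring
  have hmod : ∀ t ∈ T, t % (r * posWeight p m r i₀) < posWeight p m r i₀ := fun t ht => by
    rw [← hrD, mod_posWeight_add hm hr (hT t ht).2]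
    exact Nat.mod_lt _ hD
  have hM : 0 < r * posWeight p m r i₀ := by positivity
  rcases Nat.lt_or_ge i (i₀ + m) with h1 | h1
  · rcases Nat.lt_or_ge i₀ (i + m) with h2 | h2
    · refine (Submodule.finrank_le _).trans ?_
      rw [hF, rankExcess, if_pos (show i < i₀ + m ∧ i₀ < i + m from ⟨h1, h2⟩)]
      omega
    · obtain ⟨c, hc⟩ := posWeight_dvd hm hr h2
      rw [posWeight_add_self hm] at hc
      set D := posWeight p m r i₀
      set d := posWeight p m r i with hd_eq
      have hrd : r * d ≤ D := Nat.le_of_dvd hD ⟨c, hc⟩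
      refine (finrank_span_pow_le ζ u T r d (r * D) a (D + r * d) fun t ht s hs => ?_).trans ?_
      · have hsd : s * d < r * d := Nat.mul_lt_mul_of_pos_right hs hd
        have htm := hmod t ht
        have hlt : t % (r * D) + s * d < r * D := by nlinarith
        have hx : t + s * d = (t % (r * D) + s * d) + (r * D) * (t / (r * D)) := by
          have := Nat.mod_add_div t (r * D); omega
        rw [hx, Nat.add_mul_div_left _ _ hM, Nat.add_mul_mod_self_left, Nat.div_eq_of_lt hlt,
          Nat.mod_eq_of_lt hlt, zero_add]
        refine ⟨Nat.div_lt_of_lt_mul ?_, by omega⟩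
        rw [← ha]; exact (hT t ht).1
      · have hdiv : r ^ (n + 1) / D = r * a := by
          rw [ha, show r * D * a = r * a * D by ring, Nat.mul_div_cancel _ hD]
        rw [rankExcess, ← hd_eq, if_pos (show i < i₀ by omega), hdiv, hL, mul_add]
        have : a * (r * d) = r * a * d := by ring
        omega
  · obtain ⟨b, hb⟩ := posWeight_dvd hm hr h1
    rw [hrD] at hb
    set D := posWeight p m r i₀
    set d := posWeight p m r i with hd_eq
    refine (finrank_span_pow_le ζ u T r d (r * D) (a + r * b) D fun t ht s hs => ⟨?_, ?_⟩).trans ?_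
    · have hsd : s * d < r * d := Nat.mul_lt_mul_of_pos_right hs hd
      refine Nat.div_lt_of_lt_mul ?_
      have h3 : r * D * (a + r * b) = r ^ (n + 1) + r * d := by rw [ha, hb]; ring
      have := (hT t ht).1
      omega
    · rw [hb, mul_left_comm, Nat.add_mul_mod_self_left]
      exact hmod t ht
    · rw [add_mul, ← hL, rankExcess, ← hd_eq]
      have h3 : r * b * D = d := by rw [hb]; ring
      have h4 : d ≤ r * d := Nat.le_mul_of_pos_left _ (by omega)
      omega

lemma finrank_span_le_of_last (hm : 0 < m) (hr : r = ∏ i ∈ Finset.Icc 1 m, p i)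
    (hp : ∀ i ∈ Finset.Icc 1 m, (p i).Prime) {n : ℕ}
    (hF : Module.finrank B F = r ^ (n + 1)) (ζ : F) (u : ℕ) {j : ℕ} (hj : j < m) {T : Set ℕ}
    (hT : ∀ t ∈ T, t < r ^ (n + 1) ∧ (∀ k < m - j, digit p m r t (n * m + j + 1 + k) = 0) ∧
      ∀ k < j, digit p m r t (0 + 1 + k) = 0) (i₀ i : ℕ) :
    Module.finrank B ↥(Submodule.span B
      {x : F | ∃ t ∈ T, ∃ s < r, x = ζ ^ (u * (t + s * posWeight p m r i))})
      ≤ r ^ n + rankExcess p m r (r ^ (n + 1)) i₀ i := by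
  rcases Nat.lt_or_ge i m with him | him
  · refine (Submodule.finrank_le _).trans ?_
    rw [hF, rankExcess, if_pos him]
    omega
  have hP := posWeight_pos hm hr hp j
  have hd := posWeight_pos hm hr hp i
  have hl := posWeight_mul (p := p) (r := r) hm (n + 1)
  have hD : posWeight p m r (n * m + j) = posWeight p m r j * r ^ n := by
    have h1 := posWeight_mul_add (p := p) (r := r) (w := n) (y := j + 1) (by omega) hj
    have h2 := posWeight_mul_add (p := p) (r := r) (w := 0) (y := j + 1) (by omega) hj
    simp only [Nat.add_sub_cancel, dwy, pow_zero, zero_mul, zero_add, one_mul] at h1 h2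
    rw [h1, h2, mul_comm]
  obtain ⟨c, hc⟩ := posWeight_dvd hm hr (show j ≤ i by omega)
  set P := posWeight p m r j
  set d := posWeight p m r i with hd_eq
  refine (finrank_span_pow_le ζ u T r d P (r ^ n + r * c) 1 fun t ht s hs => ?_).trans ?_
  · obtain ⟨htl, htop, hbot⟩ := hT t ht
    have h1 := mod_posWeight_add hm hr htop
    rw [show n * m + j + (m - j) = (n + 1) * m by rw [add_mul]; omega, hl, Nat.mod_eq_of_lt htl,
      hD] at h1
    have h2 := mod_posWeight_add hm hr hbot
    rw [zero_add, posWeight_zero, Nat.mod_one] at h2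
    have hsd : s * d < r * d := Nat.mul_lt_mul_of_pos_right hs hd
    have hlt : t < P * r ^ n := h1 ▸ Nat.mod_lt _ (hD ▸ posWeight_pos hm hr hp (n * m + j))
    refine ⟨Nat.div_lt_of_lt_mul ?_, ?_⟩
    · have : P * (r ^ n + r * c) = P * r ^ n + r * d := by rw [hc]; ring
      omega
    · have : (t + s * d) % P = 0 :=
        Nat.mod_eq_zero_of_dvd ((Nat.dvd_of_mod_eq_zero h2).add (Dvd.intro _ hc.symm |>.mul_left _))
      omega
  · have h3 : r * c ≤ r * d := Nat.mul_le_mul_left _ (hc ▸ Nat.le_mul_of_pos_left _ hP)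
    rw [mul_one, rankExcess, ← hd_eq]
    omega

lemma finrank_span_Tset_le (hm : 0 < m) (hr : r = ∏ i ∈ Finset.Icc 1 m, p i)
    (hp : ∀ i ∈ Finset.Icc 1 m, (p i).Prime) (hr2 : 2 ≤ r) {n : ℕ}
    (hF : Module.finrank B F = r ^ (n + 1)) (ζ : F) (u : ℕ) {w y : ℕ} (hy : 1 ≤ y)
    (hym : y ≤ m) (i : ℕ) :
    Module.finrank B ↥(Submodule.span B
      {x : F | ∃ t ∈ Tset p m r (n + 1) (r ^ (n + 1)) w y,
        ∃ s < r, x = ζ ^ (u * (t + s * posWeight p m r i))})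
      ≤ r ^ n + rankExcess p m r (r ^ (n + 1)) (w * m + (y - 1)) i := by
  by_cases h : w + 1 < n + 1
  · refine finrank_span_le_of_not_last hm hr hp hr2 hF ζ u ?_ (fun t ht => ?_) i
    · have := Nat.mul_le_mul_right m (show w + 2 ≤ n + 1 by omega)
      rw [add_mul] at this; omega
    · rw [Tset, if_pos h] at ht
      refine ⟨ht.1, fun k hk => ?_⟩
      rw [show w * m + (y - 1) + 1 + k = w * m + y + k by omega]
      exact ht.2 k hk
  · refine finrank_span_le_of_last hm hr hp hF ζ u (j := y - 1) (by omega) (fun t ht => ?_) _ i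
    rw [Tset, if_neg h] at ht
    obtain ⟨h1, h2, h3⟩ := ht
    rw [Nat.add_sub_cancel] at h2
    exact ⟨h1, fun k hk => h2 _ (by omega) (by rw [add_mul]; omega),
      fun k hk => h3 _ (by omega) (by omega)⟩

/-- The repair bandwidth exceeds `(n̄ - 1) · l / r` by at most a constant multiple of `l`. -/
lemma sum_finrank_span_Tset_le (hm : 0 < m) (hr : r = ∏ i ∈ Finset.Icc 1 m, p i)
    (hp : ∀ i ∈ Finset.Icc 1 m, (p i).Prime) (hr2 : 2 ≤ r) {n : ℕ}
    (hF : Module.finrank B F = r ^ (n + 1)) (ζ : F) (u : ℕ) {w y : ℕ} (hw : w ≤ n) (hy : 1 ≤ y)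
    (hym : y ≤ m) :
    ∑ wz ∈ (Finset.range (n + 1) ×ˢ Finset.Icc 1 m).erase (w, y),
      Module.finrank B ↥(Submodule.span B
        {x : F | ∃ t ∈ Tset p m r (n + 1) (r ^ (n + 1)) w y,
          ∃ s < r, x = ζ ^ (u * (t + s * dwy p r wz.1 wz.2))})
      ≤ ((n + 1) * m - 1) * r ^ n + (r + 1 + 3 * m) * r ^ (n + 1) := by
  set S := Finset.range (n + 1) ×ˢ Finset.Icc 1 m
  have hS : ∀ wz ∈ S, wz.1 ≤ n ∧ 1 ≤ wz.2 ∧ wz.2 ≤ m := fun wz h => by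
    simp only [S, Finset.mem_product, Finset.mem_range, Finset.mem_Icc] at h; omega
  have hcard : (S.erase (w, y)).card = (n + 1) * m - 1 := by
    rw [Finset.card_erase_of_mem]
    · simp [S]
    · simp only [S, Finset.mem_product, Finset.mem_range, Finset.mem_Icc]; omega
  let pos : ℕ × ℕ → ℕ := fun wz => wz.1 * m + (wz.2 - 1)
  have hinj : Set.InjOn pos S := fun a ha b hb hab => by
    have ha' := hS a ha
    have hb' := hS b hb
    have e1 : pos a / m = a.1 := by
      simp only [pos]
      rw [add_comm, Nat.add_mul_div_right _ _ hm, Nat.div_eq_of_lt (by omega), zero_add]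
    have e2 : pos b / m = b.1 := by
      simp only [pos]
      rw [add_comm, Nat.add_mul_div_right _ _ hm, Nat.div_eq_of_lt (by omega), zero_add]
    have h1 : a.1 = b.1 := by rw [← e1, ← e2, hab]
    simp only [pos, h1] at hab
    exact Prod.ext h1 (by omega)
  have himage : S.image pos ⊆ Finset.range ((n + 1) * m) := fun i hi => by
    obtain ⟨a, ha, rfl⟩ := Finset.mem_image.1 hi
    have ha' := hS a ha
    have := Nat.mul_le_mul_right m ha'.1
    rw [Finset.mem_range, add_mul]
    simp only [pos]
    omega
  calc _ ≤ ∑ wz ∈ S.erase (w, y),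
        (r ^ n + rankExcess p m r (r ^ (n + 1)) (w * m + (y - 1)) (pos wz)) := by
        refine Finset.sum_le_sum fun wz hwz => ?_
        have h := hS wz (Finset.mem_of_mem_erase hwz)
        rw [← posWeight_mul_add h.2.1 h.2.2]
        exact finrank_span_Tset_le hm hr hp hr2 hF ζ u hy hym _
    _ = ((n + 1) * m - 1) * r ^ n
        + ∑ wz ∈ S.erase (w, y), rankExcess p m r (r ^ (n + 1)) (w * m + (y - 1)) (pos wz) := by
        rw [Finset.sum_add_distrib, Finset.sum_const, hcard, smul_eq_mul]
    _ ≤ _ := by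
        gcongr
        calc _ ≤ ∑ wz ∈ S, rankExcess p m r (r ^ (n + 1)) (w * m + (y - 1)) (pos wz) :=
              Finset.sum_le_sum_of_subset (Finset.erase_subset _ _)
          _ = ∑ i ∈ S.image pos, rankExcess p m r (r ^ (n + 1)) (w * m + (y - 1)) i :=
              (Finset.sum_image hinj).symm
          _ ≤ ∑ i ∈ Finset.range ((n + 1) * m),
                rankExcess p m r (r ^ (n + 1)) (w * m + (y - 1)) i :=
              Finset.sum_le_sum_of_subset himage
          _ ≤ _ := sum_rankExcess_le hm hr hp (n + 1) _

end Excess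

/-- **Corollary 7.** Fix primes `p 1, …, p m` (`m ≥ 2`) and
suppose `r̄ = p 1 ⋯ p m + 1` is a prime with `r̄ ≥ 5`.  For each `n' ≥ 2` build
the Construction-2 data from `p 1, …, p m` (so `n̄ = n'm`, `l = (r̄-1)^{n'}`,
with `d_{w,y}` and `T_{w,y}` defined with respect to `r̄ - 1`), and for a prime
power `q = |B|`, a positive divisor `u` of `q-1`, and a primitive element `ζ` of
`F = GF(q^l)` let, for `w ∈ {1,…,n'-1}` and `y ∈ {1,…,m}`,
`b' = Σ_{(w',z) ≠ (w,y)} rank_B({ζ^{u(t+s·d_{w',z})} : t ∈ T_{w,y}, s ≤ r̄-2})`.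
Then for every `ε > 0` there is `N` such that for all `n' ≥ N` and all such
`q, u, ζ, w, y` one has `b' < (r̄/(r̄-1) + ε)·(n̄-1)·l/r̄`; i.e. the ratio of
`b'` to the cut-set bound `(n̄-1)l/r̄` tends to `r̄/(r̄-1) ≤ 5/4` as `n̄ → ∞`. -/
theorem stmt_17 (m : ℕ) (hm : 2 ≤ m) (p : ℕ → ℕ)
    (hp : ∀ i ∈ Finset.Icc 1 m, (p i).Prime)
    (rb : ℕ) (hrb : rb = (∏ i ∈ Finset.Icc 1 m, p i) + 1)
    (hrbprime : rb.Prime) (hrb5 : 5 ≤ rb) :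
    ∀ ε : ℝ, 0 < ε → ∃ N : ℕ, ∀ n' : ℕ, N ≤ n' → 2 ≤ n' →
      ∀ (B F : Type) [Field B] [Field F] [Fintype B] [Fintype F]
        [Algebra B F], ∀ q : ℕ, Fintype.card B = q →
        Module.finrank B F = (rb - 1) ^ n' →
        ∀ ζ : F, orderOf ζ = q ^ ((rb - 1) ^ n') - 1 →
        ∀ u : ℕ, 0 < u → u ∣ q - 1 →
        ∀ w ∈ Finset.Icc 1 (n' - 1), ∀ y ∈ Finset.Icc 1 m,
        ((∑ wz ∈ (Finset.range n' ×ˢ Finset.Icc 1 m).erase (w, y),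
            Module.finrank B ↥(Submodule.span B
              {x : F | ∃ t ∈ Tset p m (rb - 1) n' ((rb - 1) ^ n') w y,
                ∃ s < rb - 1, x = ζ ^ (u * (t + s * dwy p (rb - 1) wz.1 wz.2))}) : ℕ) : ℝ)
          < ((rb : ℝ) / ((rb : ℝ) - 1) + ε) * (((n' * m : ℕ) : ℝ) - 1)
              * ((rb - 1 : ℕ) ^ n' : ℕ) / rb := by
  obtain ⟨r, rfl⟩ : ∃ r, rb = r + 1 := ⟨_, hrb⟩
  have hr : r = ∏ i ∈ Finset.Icc 1 m, p i := by omega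
  simp only [Nat.add_sub_cancel]
  intro ε hε
  obtain ⟨N, hN⟩ := exists_nat_gt ((r + 1 + 3 * m) * (r + 1) / ε : ℝ)
  refine ⟨N, fun n' hNn hn2 B F _ _ _ _ _ q _ hF ζ _ u _ _ w hw y hy => ?_⟩
  obtain ⟨n, rfl⟩ : ∃ n, n' = n + 1 := ⟨n' - 1, by omega⟩
  rw [Finset.mem_Icc] at hw hy
  have hbound := sum_finrank_span_Tset_le (by omega : 0 < m) hr hp (by omega) hF ζ u
    (w := w) (by omega) hy.1 hy.2
  have hr0 : (0 : ℝ) < r := by exact_mod_cast (by omega : 0 < r)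
  have hnm : n + 1 ≤ (n + 1) * m - 1 := by
    have := Nat.mul_le_mul_left (n + 1) hm; omega
  have hcast : (((n + 1) * m - 1 : ℕ) : ℝ) = (((n + 1) * m : ℕ) : ℝ) - 1 := by
    rw [Nat.cast_sub (by omega), Nat.cast_one]
  have hlarge : (r + 1 + 3 * m) * (r + 1) < ε * ((((n + 1) * m : ℕ) : ℝ) - 1) := by
    rw [div_lt_iff₀' hε] at hN
    refine hN.trans_le ?_
    rw [← hcast]
    gcongr
    exact hNn.trans hnm
  refine (Nat.cast_le (α := ℝ).2 hbound).trans_lt ?_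
  rw [Nat.cast_add, Nat.cast_mul, Nat.cast_mul, hcast]
  generalize (((n + 1) * m : ℕ) : ℝ) - 1 = A at *
  have hL : (0 : ℝ) < r ^ (n + 1) := by positivity
  push_cast
  rw [lt_div_iff₀ (by positivity), add_sub_cancel_right]
  calc _ = A * (r + 1) * r ^ n + (r + 1 + 3 * m) * (r + 1) * (r : ℝ) ^ (n + 1) := by ring
    _ < A * (r + 1) * r ^ n + ε * A * (r : ℝ) ^ (n + 1) := by gcongr
    _ = _ := by field_simp; ring
end
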